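/- arXiv:1912.01153 — 10 statements merged into one kernel-verified Lean document; each statement's English description precedes it below -/
import Mathlib

section
/- Let K be a subfield of ℂ which is finite-dimensional over ℚ, let N ≥ 1 and let k ≥ 2 be an even integer. Let a : ℕ → ℂ take all its values in K with a(1) = 1, and suppose that for every prime p not dividing N there is a root of unity χₚ ∈ K such that a(p^(r+2)) = a(p)·a(p^(r+1)) − χₚ·p^(k−1)·a(p^r) for all r ≥ 0, while for every prime p dividing N one has a(p^(r+1)) = a(p)·a(p^r) for all r ≥ 0. Then there exists an integer M ≥ 1 such that for every prime p not dividing M, either a(p) = 0 or a(p^r) ≠ 0 for all r ≥ 1. -/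
/-- The product of two distinct primes is not the square of a rational number. -/
lemma not_isSquare_rat_prime_mul_prime {p q : ℕ} (hp : p.Prime) (hq : q.Prime) (hpq : p ≠ q) :
    ¬ IsSquare ((p : ℚ) * q) := by
  have hsq : Squarefree (p * q) :=
    (Nat.squarefree_mul ((Nat.coprime_primes hp hq).2 hpq)).2 ⟨hp.squarefree, hq.squarefree⟩
  rw [← Nat.cast_mul, Rat.isSquare_natCast_iff]
  rintro ⟨x, hx⟩
  have h1 : x = 1 := Nat.isUnit_iff.1 (hsq x ⟨1, by rw [mul_one, hx]⟩)
  have := hp.two_le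
  have := hq.two_le
  subst h1
  nlinarith

/-- If the square roots of `p * q` and of `p * r` generate the same field, then `q = r`. -/
lemma eq_of_adjoin_sqrt_eq {K : Type*} [Field K] [CharZero K] {p q r : ℕ}
    (hp : p.Prime) (hq : q.Prime) (hr : r.Prime) (hpq : q ≠ p) (hpr : r ≠ p) {s t : K}
    (hs : s ^ 2 = (p : K) * q) (ht : t ^ 2 = (p : K) * r)
    (h : IntermediateField.adjoin ℚ {s} = IntermediateField.adjoin ℚ {t}) : q = r := by
  by_contra hqr
  have hsint : IsIntegral ℚ s :=
    ⟨Polynomial.X ^ 2 - Polynomial.C ((p : ℚ) * q),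
      Polynomial.monic_X_pow_sub_C _ two_ne_zero, by simp [hs]⟩
  have htmem : t ∈ Submodule.span ℚ {(1 : K), s} := by
    have h1 : t ∈ IntermediateField.adjoin ℚ {s} :=
      h ▸ IntermediateField.mem_adjoin_simple_self ℚ t
    rw [← IntermediateField.mem_toSubalgebra,
      IntermediateField.adjoin_simple_toSubalgebra_of_isAlgebraic hsint.isAlgebraic] at h1
    refine Algebra.adjoin_induction (p := fun x _ => x ∈ Submodule.span ℚ {(1 : K), s})
      ?_ ?_ ?_ ?_ h1
    · rintro x rfl
      exact Submodule.subset_span (by simp)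
    · intro c
      rw [Algebra.algebraMap_eq_smul_one]
      exact Submodule.smul_mem _ _ (Submodule.subset_span (by simp))
    · intro x y _ _ hx hy
      exact add_mem hx hy
    · intro x y _ _ hx hy
      obtain ⟨a, b, rfl⟩ := Submodule.mem_span_pair.1 hx
      obtain ⟨c, d, rfl⟩ := Submodule.mem_span_pair.1 hy
      refine Submodule.mem_span_pair.2 ⟨a * c + b * d * (p * q), a * d + b * c, ?_⟩
      simp only [Algebra.smul_def, eq_ratCast]
      push_cast
      linear_combination (-(b : K) * d) * hs
  obtain ⟨x, y, hxy⟩ := Submodule.mem_span_pair.1 htmem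
  simp only [Algebra.smul_def, eq_ratCast, mul_one] at hxy
  have hsq : (x : K) ^ 2 + y ^ 2 * (p * q) + 2 * x * y * s = p * r := by
    rw [← ht, ← hxy]
    linear_combination (-(y : K) ^ 2) * hs
  have hp0 : (p : ℚ) ≠ 0 := mod_cast hp.ne_zero
  by_cases hz : x * y = 0
  · have hz' : (x : K) * y = 0 := mod_cast hz
    have hsq' : x ^ 2 + y ^ 2 * (p * q) = p * r := by
      have : (x : K) ^ 2 + y ^ 2 * (p * q) = p * r := by
        linear_combination hsq - 2 * s * hz'
      exact_mod_cast this
    rcases mul_eq_zero.1 hz with rfl | rfl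
    · refine not_isSquare_rat_prime_mul_prime hq hr hqr ⟨y * q, ?_⟩
      apply mul_left_cancel₀ hp0
      linear_combination (-(q : ℚ)) * hsq'
    · exact not_isSquare_rat_prime_mul_prime hp hr hpr.symm ⟨x, by linear_combination -hsq'⟩
  · have hz' : (x : K) * y ≠ 0 := mod_cast hz
    set w : ℚ := (p * r - x ^ 2 - y ^ 2 * (p * q)) / (2 * (x * y)) with hw
    have hsw : s = (w : K) := by
      rw [hw]
      push_cast
      rw [eq_div_iff (mul_ne_zero two_ne_zero hz')]
      linear_combination hsq
    refine not_isSquare_rat_prime_mul_prime hp hq hpq.symm ⟨w, ?_⟩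
    rw [hsw] at hs
    have : w ^ 2 = (p : ℚ) * q := mod_cast hs
    rw [← this, sq]

/-- In a number field for a fixed prime `p`, only finitely many primes `q ≠ p` are such that
`p * q` is a square. -/
lemma finite_primes_mul_sq (K : Type*) [Field K] [NumberField K] {p : ℕ} (hp : p.Prime) :
    {q : ℕ | q.Prime ∧ q ≠ p ∧ ∃ s : K, s ^ 2 = (p : K) * q}.Finite := by
  have : Finite (IntermediateField ℚ K) :=
    Field.finite_intermediateField_of_exists_primitive_element ℚ K
      (Field.exists_primitive_element ℚ K)
  choose! s hs using fun (q : ℕ) (hq : ∃ s : K, s ^ 2 = (p : K) * q) => hq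
  refine Set.Finite.of_finite_image (f := fun q => IntermediateField.adjoin ℚ {s q})
    (Set.toFinite _) ?_
  rintro q ⟨hq, hqp, hq'⟩ r ⟨hr, hrp, hr'⟩ h
  exact eq_of_adjoin_sqrt_eq hp hq hr hqp hrp (hs q hq') (hs r hr') h

/-- In a number field, for fixed `u ≠ 0` and odd `m`, only finitely many primes `p` are such
that `u * p ^ m` is a square. -/
lemma finite_primes_mul_odd_pow_sq (K : Type*) [Field K] [NumberField K] {u : K} (hu : u ≠ 0)
    {m : ℕ} (hm : Odd m) :
    {p : ℕ | p.Prime ∧ ∃ b : K, b ^ 2 = u * (p : K) ^ m}.Finite := by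
  rcases Set.eq_empty_or_nonempty {p : ℕ | p.Prime ∧ ∃ b : K, b ^ 2 = u * (p : K) ^ m} with
    h | ⟨p, hp, b, hb⟩
  · rw [h]
    exact Set.finite_empty
  refine ((finite_primes_mul_sq K hp).insert p).subset ?_
  rintro q ⟨hq, c, hc⟩
  by_cases hqp : q = p
  · exact Or.inl hqp
  refine Or.inr ⟨hq, hqp, ?_⟩
  obtain ⟨j, rfl⟩ := hm
  have hp0 : (p : K) ≠ 0 := mod_cast hp.ne_zero
  have hq0 : (q : K) ≠ 0 := mod_cast hq.ne_zero
  refine ⟨b * c / (u * (p * q) ^ j), ?_⟩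
  rw [div_pow, mul_pow b c, hb, hc, div_eq_iff (by positivity)]
  ring

/-- A number field contains only finitely many elements of the form `χ * (1 + ζ) ^ 2 / ζ` with
`χ` and `ζ` roots of unity, `χ` in the field and `ζ` in an extension. -/
lemma finite_rootOfUnity_mul_sq_div (K L : Type*) [Field K] [NumberField K] [Field L]
    [Algebra K L] :
    {u : K | ∃ χ : K, ∃ ζ : L, (∃ n, 0 < n ∧ χ ^ n = 1) ∧ (∃ n, 0 < n ∧ ζ ^ n = 1) ∧
      algebraMap K L u * ζ = (1 + ζ) ^ 2 * algebraMap K L χ}.Finite := by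
  refine (NumberField.Embeddings.finite_of_norm_le K ℂ 4).subset ?_
  rintro u ⟨χ, ζ, ⟨n, hn, hχ⟩, ⟨m, hm, hζ⟩, h⟩
  have hζint : IsIntegral ℤ ζ := IsIntegral.of_pow hm (hζ ▸ isIntegral_one)
  have hχint : IsIntegral ℤ χ := IsIntegral.of_pow hn (hχ ▸ isIntegral_one)
  have hζ0 : ζ ≠ 0 := by
    rintro rfl
    simp [hm.ne'] at hζ
  have hinv : ζ⁻¹ = ζ ^ (m - 1) :=
    inv_eq_of_mul_eq_one_right (by rw [← pow_succ', Nat.sub_add_cancel hm, hζ])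
  have hu : algebraMap K L u = algebraMap K L χ * (ζ⁻¹ + 1 + 1 + ζ) := by
    field_simp
    linear_combination h
  refine ⟨?_, fun φ => ?_⟩
  · rw [← isIntegral_algebraMap_iff (algebraMap K L).injective, hu, hinv]
    exact hχint.algebraMap.mul
      ((((hζint.pow _).add isIntegral_one).add isIntegral_one).add hζint)
  · have hζK : IsIntegral K ζ := IsIntegral.of_pow hm (hζ ▸ isIntegral_one)
    have : FiniteDimensional K (IntermediateField.adjoin K {ζ}) :=
      IntermediateField.adjoin.finiteDimensional hζK
    set ψ := NumberField.ComplexEmbedding.lift (IntermediateField.adjoin K {ζ}) φ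
    set z := IntermediateField.AdjoinSimple.gen K ζ
    have hz : z ^ m = 1 := Subtype.ext (by simpa [z] using hζ)
    have hu' : algebraMap K (IntermediateField.adjoin K {ζ}) u =
        algebraMap K _ χ * (z⁻¹ + 1 + 1 + z) := Subtype.ext (by simpa [z] using hu)
    have hφ : ∀ x, ψ (algebraMap K _ x) = φ x :=
      NumberField.ComplexEmbedding.lift_algebraMap_apply _ φ
    have hψz : ‖ψ z‖ = 1 :=
      Complex.norm_eq_one_of_pow_eq_one (by rw [← map_pow, hz, map_one]) hm.ne'
    have hφχ : ‖φ χ‖ = 1 :=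
      Complex.norm_eq_one_of_pow_eq_one (by rw [← map_pow, hχ, map_one]) hn.ne'
    have hφu : φ u = φ χ * ((ψ z)⁻¹ + 1 + 1 + ψ z) := by
      rw [← hφ, hu']
      simp [hφ]
    rw [hφu, norm_mul, hφχ, one_mul]
    refine (norm_add₄_le).trans ?_
    rw [norm_inv, hψz]
    norm_num

/-- If a Lucas-type sequence `s (r + 2) = A * s (r + 1) - c * s r` with `s 0 = 1`, `s 1 = A`
vanishes somewhere, then the ratio `ζ` of its characteristic roots is a root of unity, so
that `A ^ 2 * ζ = (1 + ζ) ^ 2 * c`. -/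
lemma exists_rootOfUnity_of_recurrence_eq_zero {L : Type*} [Field L] [IsAlgClosed L] [CharZero L]
    {A c : L} (hc : c ≠ 0) {s : ℕ → L} (h0 : s 0 = 1) (h1 : s 1 = A)
    (hs : ∀ r, s (r + 2) = A * s (r + 1) - c * s r) {r : ℕ} (hr : s r = 0) :
    ∃ ζ : L, (∃ n, 0 < n ∧ ζ ^ n = 1) ∧ A ^ 2 * ζ = (1 + ζ) ^ 2 * c := by
  obtain ⟨δ, hδ⟩ := IsAlgClosed.exists_pow_nat_eq (A ^ 2 - 4 * c) two_pos
  obtain ⟨α, hα⟩ : ∃ α, α = (A + δ) / 2 := ⟨_, rfl⟩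
  obtain ⟨β, hβ⟩ : ∃ β, β = (A - δ) / 2 := ⟨_, rfl⟩
  have hA : A = α + β := by
    rw [hα, hβ]
    ring
  have hcc : c = α * β := by
    rw [hα, hβ]
    linear_combination hδ / 4
  clear hα hβ
  subst hA hcc
  obtain ⟨hα0, hβ0⟩ := mul_ne_zero_iff.1 hc
  have hgen : ∀ n, (α - β) * s n = α ^ (n + 1) - β ^ (n + 1) ∧
      (α - β) * s (n + 1) = α ^ (n + 2) - β ^ (n + 2) := by
    intro n
    induction n with
    | zero => exact ⟨by rw [h0]; ring, by rw [zero_add, h1]; ring⟩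
    | succ n ih =>
      refine ⟨ih.2, ?_⟩
      rw [hs]
      linear_combination (α + β) * ih.2 - α * β * ih.1
  by_cases hαβ : α = β
  · subst hαβ
    have hmul : ∀ n : ℕ, s n = (n + 1) * α ^ n ∧ s (n + 1) = (n + 2) * α ^ (n + 1) := by
      intro n
      induction n with
      | zero => exact ⟨by rw [h0]; simp, by rw [zero_add, h1]; push_cast; ring⟩
      | succ n ih =>
        refine ⟨by rw [ih.2]; push_cast; ring, ?_⟩
        rw [hs, ih.1, ih.2]
        push_cast
        ring
    rw [(hmul r).1] at hr
    exact absurd hr (mul_ne_zero (mod_cast r.succ_ne_zero) (pow_ne_zero _ hα0))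
  · refine ⟨α / β, ⟨r + 1, r.succ_pos, ?_⟩, ?_⟩
    · rw [div_pow, div_eq_one_iff_eq (pow_ne_zero _ hβ0)]
      have := (hgen r).1
      rw [hr, mul_zero] at this
      exact sub_eq_zero.1 this.symm
    · field_simp
      ring

/-- Coefficient-level form of Lemma 2.2 of Kowalski–Robert–Wu: for a sequence `a`
satisfying the Hecke relations of a primitive form of even weight `k`, level `N`, with
root-of-unity character values, and values in a number field `K ⊆ ℂ`, there is an
integer `M ≥ 1` such that for every prime `p ∤ M`, either `a p = 0` or
`a (p ^ r) ≠ 0` for all `r ≥ 1`. -/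
theorem stmt_0 (K : IntermediateField ℚ ℂ) [FiniteDimensional ℚ K]
    (N : ℕ) (hN : 1 ≤ N) (k : ℕ) (hk : 2 ≤ k) (hke : Even k)
    (a : ℕ → ℂ) (haK : ∀ n : ℕ, a n ∈ K) (ha1 : a 1 = 1)
    (hrec : ∀ p : ℕ, p.Prime → ¬ p ∣ N → ∃ χ : ℂ, χ ∈ K ∧
      (∃ n : ℕ, 0 < n ∧ χ ^ n = 1) ∧
      ∀ r : ℕ, a (p ^ (r + 2)) = a p * a (p ^ (r + 1)) - χ * (p : ℂ) ^ (k - 1) * a (p ^ r))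
    (hdvd : ∀ p : ℕ, p.Prime → p ∣ N → ∀ r : ℕ, a (p ^ (r + 1)) = a p * a (p ^ r)) :
    ∃ M : ℕ, 1 ≤ M ∧ ∀ p : ℕ, p.Prime → ¬ p ∣ M →
      a p = 0 ∨ ∀ r : ℕ, 1 ≤ r → a (p ^ r) ≠ 0 := by
  have : NumberField K := {}
  have hodd : Odd (k - 1) := Nat.Even.sub_odd (by omega) hke odd_one
  set bad : Set ℕ := {p | p.Prime ∧ ¬ p ∣ N ∧ a p ≠ 0 ∧ ∃ r, a (p ^ r) = 0}
  set u : ℕ → K := fun p => ⟨a p, haK p⟩ ^ 2 / (p : K) ^ (k - 1) with hu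
  have hfin : bad.Finite := by
    refine Set.Finite.of_finite_fibers u
      ((finite_rootOfUnity_mul_sq_div K ℂ).subset ?_) ?_
    · rintro _ ⟨p, ⟨hp, hpN, -, r, hr⟩, rfl⟩
      obtain ⟨χ, hχK, ⟨n, hn, hχ⟩, hs⟩ := hrec p hp hpN
      have hp0 : (p : ℂ) ^ (k - 1) ≠ 0 := pow_ne_zero _ (mod_cast hp.ne_zero)
      have hχ0 : χ ≠ 0 := by
        rintro rfl
        simp [hn.ne'] at hχ
      obtain ⟨ζ, hζ, h⟩ := exists_rootOfUnity_of_recurrence_eq_zero (s := fun r => a (p ^ r))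
        (mul_ne_zero hχ0 hp0) (by simpa using ha1) (by simp) hs hr
      refine ⟨⟨χ, hχK⟩, ζ, ⟨n, hn, Subtype.ext hχ⟩, hζ, ?_⟩
      have hval : algebraMap K ℂ (u p) = a p ^ 2 / (p : ℂ) ^ (k - 1) := by
        simp [hu]
      have hχval : algebraMap K ℂ ⟨χ, hχK⟩ = χ := rfl
      rw [hval, hχval]
      field_simp
      linear_combination h
    · rintro _ ⟨p, ⟨hp, -, hap, -⟩, rfl⟩
      have hup : u p ≠ 0 :=
        div_ne_zero (pow_ne_zero _ fun h => hap (congrArg Subtype.val h))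
          (pow_ne_zero _ (mod_cast hp.ne_zero))
      refine (finite_primes_mul_odd_pow_sq K hup hodd).subset ?_
      rintro q ⟨⟨hq, -⟩, hqu⟩
      refine ⟨hq, ⟨a q, haK q⟩, ?_⟩
      rw [← (show u q = u p from hqu)]
      exact (div_mul_cancel₀ _ (pow_ne_zero _ (mod_cast hq.ne_zero))).symm
  refine ⟨N * ∏ p ∈ hfin.toFinset, p, ?_, fun p hp hpM => ?_⟩
  · refine Nat.mul_pos hN (Finset.prod_pos fun p hp => ?_)
    exact ((hfin.mem_toFinset.1 hp).1).pos
  · by_contra! hcon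
    obtain ⟨hap, r, -, hr⟩ := hcon
    refine hpM (Dvd.dvd.mul_left (Finset.dvd_prod_of_mem _ ?_) N)
    exact hfin.mem_toFinset.2 ⟨hp, fun h => hpM (h.mul_right _), hap, r, hr⟩
end

section
/- Let a : ℕ → ℂ satisfy a(1) = 1 and a(mn) = a(m)·a(n) whenever m and n are coprime positive integers, and let M ≥ 1 be an integer such that for every prime p not dividing M, either a(p) = 0 or a(p^r) ≠ 0 for all r ≥ 1. If n is the smallest positive integer with gcd(n, M) = 1 and a(n) = 0 (i.e. a(n) = 0 and a(m) ≠ 0 for every positive integer m < n coprime to M), then n is prime. -/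
/-- If `a` is multiplicative on coprime arguments with `a 1 = 1`, and for every prime
`p ∤ M` either `a p = 0` or `a (p^r) ≠ 0` for all `r ≥ 1`, then the smallest positive
integer `n` coprime to `M` with `a n = 0` is prime. -/
theorem stmt_1 (a : ℕ → ℂ) (ha1 : a 1 = 1)
    (hmul : ∀ m n : ℕ, 0 < m → 0 < n → Nat.Coprime m n → a (m * n) = a m * a n)
    (M : ℕ) (hM : 1 ≤ M)
    (hP : ∀ p : ℕ, p.Prime → ¬ p ∣ M → a p = 0 ∨ ∀ r : ℕ, 1 ≤ r → a (p ^ r) ≠ 0)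
    (n : ℕ) (hn : 0 < n) (hcop : Nat.gcd n M = 1) (han : a n = 0)
    (hmin : ∀ m : ℕ, 0 < m → m < n → Nat.gcd m M = 1 → a m ≠ 0) :
    n.Prime := by
  have hn1 : n ≠ 1 := by
    rintro rfl
    simp [ha1] at han
  by_contra hnp
  obtain ⟨p, hp, hpn⟩ := Nat.exists_prime_and_dvd hn1
  have hdvd : ∀ {d : ℕ}, d ∣ n → Nat.gcd d M = 1 := fun h => Nat.Coprime.coprime_dvd_left h hcop
  have hpM : ¬ p ∣ M := hp.coprime_iff_not_dvd.mp (hdvd hpn)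
  have hplt : p < n :=
    lt_of_le_of_ne (Nat.le_of_dvd hn hpn) fun h => hnp (h ▸ hp)
  have hpow := (hP p hp hpM).resolve_left (hmin p hp.pos hplt (hdvd hpn))
  obtain ⟨r, m, hpm, rfl⟩ := Nat.exists_eq_pow_mul_and_not_dvd hn.ne' p hp.ne_one
  have hr : r ≠ 0 := by
    rintro rfl
    exact hpm (by simpa using hpn)
  have hm : 0 < m := Nat.pos_of_mul_pos_left hn
  have hmlt : m < p ^ r * m := lt_mul_of_one_lt_left hm (Nat.one_lt_pow hr hp.one_lt)
  rw [hmul _ _ (pow_pos hp.pos r) hm ((hp.coprime_iff_not_dvd.mpr hpm).pow_left r)] at han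
  exact mul_ne_zero (hpow r (Nat.one_le_iff_ne_zero.mpr hr))
    (hmin m hm hmlt (hdvd (Dvd.intro_left _ rfl))) han
end

section
/- Let N ≥ 1 and let k ≥ 2 be an even integer. Let a : ℕ → ℤ satisfy: a(p^0) = 1 and a(p^(r+2)) = a(p)·a(p^(r+1)) − p^(k−1)·a(p^r) for every prime p not dividing N and every r ≥ 0. Then for every prime p with p ∤ N, p ≠ 2 and p ≠ 3, either a(p) = 0 or a(p^r) ≠ 0 for all r ≥ 1. -/
/-- If `P ^ 2 ≥ 4 * Q ≥ 0` and `P ≠ 0`, the Lucas sequence with parameters `P`, `Q` never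
vanishes. -/
lemma lucas_ne_zero_of_discrim_nonneg {u : ℕ → ℤ} {P Q : ℤ} (h0 : u 0 = 1) (h1 : u 1 = P)
    (hrec : ∀ r, u (r + 2) = P * u (r + 1) - Q * u r) (hP : P ≠ 0) (hQ : 0 ≤ Q)
    (hPQ : 4 * Q ≤ P ^ 2) (r : ℕ) : u r ≠ 0 := by
  have hP' : 0 < |P| := abs_pos.mpr hP
  have growth : ∀ r, 0 < |u r| ∧ |P| * |u r| ≤ 2 * |u (r + 1)| := by
    intro r
    induction r with
    | zero => exact ⟨by simp [h0], by simpa [h0, h1] using by linarith⟩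
    | succ r ih =>
      obtain ⟨hpos, hle⟩ := ih
      have hpos' : 0 < |u (r + 1)| := by nlinarith [mul_pos hP' hpos]
      refine ⟨hpos', ?_⟩
      have htri : |P| * |u (r + 1)| - Q * |u r| ≤ |u (r + 2)| := by
        rw [hrec, ← abs_mul, ← abs_of_nonneg hQ, ← abs_mul, abs_of_nonneg hQ]
        exact abs_sub_abs_le_abs_sub _ _
      have hQu : 4 * Q * |u r| ≤ |P| ^ 2 * |u r| := by
        rw [sq_abs]
        exact mul_le_mul_of_nonneg_right hPQ hpos.le
      have hPu := mul_le_mul_of_nonneg_left hle hP'.le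
      nlinarith
  exact abs_pos.mp (growth r).1

/-- If the prime `p` divides `Q` to more than twice the power to which it divides `P`, the Lucas
sequence with parameters `P`, `Q` never vanishes. -/
lemma lucas_ne_zero_of_valuation_lt {u : ℕ → ℤ} {p P Q R : ℤ} {v : ℕ} (hp : Prime p)
    (h0 : u 0 = 1) (h1 : u 1 = p ^ v * P)
    (hrec : ∀ r, u (r + 2) = p ^ v * P * u (r + 1) - Q * u r) (hP : ¬ p ∣ P)
    (hQ : Q = p ^ (2 * v) * R) (hR : p ∣ R) (r : ℕ) : u r ≠ 0 := by
  have factor : ∀ r, ∃ x y, u r = p ^ (v * r) * x ∧ u (r + 1) = p ^ (v * (r + 1)) * y ∧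
      ¬ p ∣ x ∧ ¬ p ∣ y := by
    intro r
    induction r with
    | zero => exact ⟨1, P, by simp [h0], by simp [h1], hp.not_dvd_one, hP⟩
    | succ r ih =>
      obtain ⟨x, y, hx, hy, -, hpy⟩ := ih
      refine ⟨y, P * y - R * x, hy, ?_, hpy, ?_⟩
      · rw [hrec, hx, hy, hQ]
        ring
      · rw [dvd_sub_left (hR.mul_right x)]
        exact hp.not_dvd_mul hP hpy
  obtain ⟨x, -, hx, -, hpx, -⟩ := factor r
  rw [hx]
  exact mul_ne_zero (pow_ne_zero _ hp.ne_zero) (by rintro rfl; exact hpx (dvd_zero p))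

/-- Corrected second part of Lemma 2.2 of Kowalski–Robert–Wu: for an integer-valued
sequence satisfying the Hecke relations of a primitive form of even weight `k` and
level `N` with trivial character, for every prime `p` with `p ∤ N`, `p ≠ 2`, `p ≠ 3`,
either `a p = 0` or `a (p^r) ≠ 0` for all `r ≥ 1`. -/
theorem stmt_2 (N : ℕ) (hN : 1 ≤ N) (k : ℕ) (hk : 2 ≤ k) (hke : Even k)
    (a : ℕ → ℤ)
    (hone : ∀ p : ℕ, p.Prime → ¬ p ∣ N → a (p ^ 0) = 1)
    (hrec : ∀ p : ℕ, p.Prime → ¬ p ∣ N → ∀ r : ℕ,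
      a (p ^ (r + 2)) = a p * a (p ^ (r + 1)) - (p : ℤ) ^ (k - 1) * a (p ^ r)) :
    ∀ p : ℕ, p.Prime → ¬ p ∣ N → p ≠ 2 → p ≠ 3 →
      a p = 0 ∨ ∀ r : ℕ, 1 ≤ r → a (p ^ r) ≠ 0 := by
  intro p hp hpN hp2 hp3
  refine or_iff_not_imp_left.mpr fun hap r _ ↦ ?_
  have hp5 : (5 : ℤ) ≤ p := by
    have h4 : p ≠ 4 := by rintro rfl; exact absurd hp (by decide)
    have := hp.two_le
    omega
  have hpZ : Prime (p : ℤ) := Nat.prime_iff_prime_int.mp hp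
  have hfin : FiniteMultiplicity (p : ℤ) (a p) :=
    Int.finiteMultiplicity_iff.mpr ⟨by simpa using hp.ne_one, hap⟩
  obtain ⟨P, hv, hP⟩ := hfin.exists_eq_pow_mul_and_not_dvd
  generalize multiplicity (p : ℤ) (a p) = v at hv
  have hrec' := hrec p hp hpN
  rcases lt_or_ge (2 * v) (k - 1) with hlt | hge
  · rw [hv] at hrec'
    refine lucas_ne_zero_of_valuation_lt (u := fun r ↦ a (p ^ r)) (R := (p : ℤ) ^ (k - 1 - 2 * v))
      hpZ (hone p hp hpN) (by simpa using hv) hrec' hP ?_ (dvd_pow_self _ (by omega)) r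
    rw [← pow_add, Nat.add_sub_cancel' hlt.le]
  · refine lucas_ne_zero_of_discrim_nonneg (u := fun r ↦ a (p ^ r)) (hone p hp hpN) (by simp)
      hrec' hap (by positivity) ?_ r
    have hk' : k - 1 + 1 ≤ 2 * v := by
      obtain ⟨m, rfl⟩ := hke
      omega
    have hP0 : P ≠ 0 := by rintro rfl; exact hP (dvd_zero _)
    have hP1 : 1 ≤ P ^ 2 := by have := sq_pos_of_ne_zero hP0; omega
    have hpow : (0 : ℤ) < (p : ℤ) ^ (k - 1) := by positivity
    calc 4 * (p : ℤ) ^ (k - 1) ≤ (p : ℤ) ^ (k - 1 + 1) := by rw [pow_succ]; nlinarith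
      _ ≤ (p : ℤ) ^ (2 * v) := pow_le_pow_right₀ (by omega) hk'
      _ ≤ (p : ℤ) ^ (2 * v) * P ^ 2 := le_mul_of_one_le_right (by positivity) hP1
      _ = a p ^ 2 := by rw [hv]; ring
end

section
/- Let N ≥ 1 be odd and let k ≥ 2 be an even integer. Let a : ℕ → ℤ satisfy a(p^0) = 1 and a(p^(r+2)) = a(p)·a(p^(r+1)) − p^(k−1)·a(p^r) for every prime p not dividing N and every r ≥ 0. If a(2) ≠ 2^(k/2) and a(2) ≠ −2^(k/2), then either a(2) = 0 or a(2^r) ≠ 0 for all r ≥ 1. -/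
/-- A second-order recurrence with real characteristic roots and nonzero trace never vanishes. -/
theorem recurrence_ne_zero_of_four_mul_le_sq {u : ℕ → ℤ} {A D : ℤ} (h0 : u 0 = 1) (h1 : u 1 = A)
    (hu : ∀ r, u (r + 2) = A * u (r + 1) - D * u r) (hA : A ≠ 0) (hD : 0 ≤ D)
    (hAD : 4 * D ≤ A ^ 2) (r : ℕ) : u r ≠ 0 := by
  have key : ∀ r, u r ≠ 0 ∧ |A| * |u r| ≤ 2 * |u (r + 1)| := by
    intro r
    induction r with
    | zero =>
      simp only [h0, h1, zero_add, abs_one, mul_one, ne_eq, one_ne_zero, not_false_eq_true,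
        true_and]
      linarith [abs_nonneg A]
    | succ r ih =>
      obtain ⟨hr, ih⟩ := ih
      have hApos : 0 < |A| := abs_pos.mpr hA
      have hupos : 0 < |u r| := abs_pos.mpr hr
      refine ⟨fun h ↦ ?_, ?_⟩
      · rw [h, abs_zero] at ih
        nlinarith [mul_pos hApos hupos]
      · have h := abs_sub_abs_le_abs_sub (A * u (r + 1)) (D * u r)
        rw [← hu r, abs_mul, abs_mul, abs_of_nonneg hD] at h
        have hstep := mul_le_mul_of_nonneg_left ih hApos.le
        have hdisc := mul_le_mul_of_nonneg_right hAD hupos.le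
        rw [← sq_abs] at hdisc
        linarith
  exact (key r).1

/-- If `A = 2 ^ t * b` and `D = 2 ^ (2 * t) * d` with `b` odd and `d` even, then each term of the
recurrence is a power of two times an odd number, hence nonzero. -/
theorem recurrence_ne_zero_of_odd {u : ℕ → ℤ} {b d : ℤ} {t : ℕ} (h0 : u 0 = 1)
    (h1 : u 1 = 2 ^ t * b)
    (hu : ∀ r, u (r + 2) = 2 ^ t * b * u (r + 1) - 2 ^ (2 * t) * d * u r)
    (hb : Odd b) (hd : Even d) (r : ℕ) : u r ≠ 0 := by
  have key : ∀ r, (∃ v, Odd v ∧ u r = 2 ^ (t * r) * v) ∧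
      ∃ w, Odd w ∧ u (r + 1) = 2 ^ (t * (r + 1)) * w := by
    intro r
    induction r with
    | zero => exact ⟨⟨1, odd_one, by simp [h0]⟩, ⟨b, hb, by simp [h1]⟩⟩
    | succ r ih =>
      obtain ⟨⟨v, -, hv⟩, w, hw, huw⟩ := ih
      refine ⟨⟨w, hw, huw⟩, b * w - d * v, (hb.mul hw).sub_even (hd.mul_right v), ?_⟩
      rw [hu r, hv, huw]
      ring
  obtain ⟨⟨v, hv, huv⟩, -⟩ := key r
  rw [huv]
  refine mul_ne_zero (by positivity) fun h ↦ ?_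
  simp [h] at hv

/-- If `N` is odd (so `2 ∤ N`), `k ≥ 2` is even, `a : ℕ → ℤ` satisfies the Hecke
relations at primes not dividing `N`, and `a 2 ≠ ±2^(k/2)`, then either `a 2 = 0`
or `a (2^r) ≠ 0` for all `r ≥ 1`. -/
theorem stmt_3 (N : ℕ) (hN : 1 ≤ N) (hNodd : Odd N) (k : ℕ) (hk : 2 ≤ k) (hke : Even k)
    (a : ℕ → ℤ)
    (hone : ∀ p : ℕ, p.Prime → ¬ p ∣ N → a (p ^ 0) = 1)
    (hrec : ∀ p : ℕ, p.Prime → ¬ p ∣ N → ∀ r : ℕ,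
      a (p ^ (r + 2)) = a p * a (p ^ (r + 1)) - (p : ℤ) ^ (k - 1) * a (p ^ r))
    (h2 : a 2 ≠ 2 ^ (k / 2)) (h2' : a 2 ≠ -(2 ^ (k / 2))) :
    a 2 = 0 ∨ ∀ r : ℕ, 1 ≤ r → a (2 ^ r) ≠ 0 := by
  obtain ⟨m, rfl⟩ := hke
  have hm : (m + m) / 2 = m := by omega
  rw [hm] at h2 h2'
  have h2N : ¬ 2 ∣ N := hNodd.not_two_dvd_nat
  have hu0 := hone 2 Nat.prime_two h2N
  have hu := hrec 2 Nat.prime_two h2N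
  push_cast at hu
  refine or_iff_not_imp_left.mpr fun hA r _ ↦ ?_
  obtain ⟨b, hAb, hb⟩ := (Int.finiteMultiplicity_iff (a := 2).mpr
    ⟨by decide, hA⟩).exists_eq_pow_mul_and_not_dvd
  rw [← even_iff_two_dvd, Int.not_even_iff_odd] at hb
  generalize multiplicity 2 (a 2) = t at hAb
  rcases lt_or_ge t m with htm | hmt
  · refine recurrence_ne_zero_of_odd (u := fun r ↦ a (2 ^ r)) (d := 2 ^ (m + m - 1 - 2 * t))
      hu0 (by simpa using hAb) (fun r ↦ ?_) hb ?_ r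
    · rw [← pow_add, ← hAb, show 2 * t + (m + m - 1 - 2 * t) = m + m - 1 by omega]
      exact hu r
    · exact even_two.pow_of_ne_zero (by omega)
  · refine recurrence_ne_zero_of_four_mul_le_sq (u := fun r ↦ a (2 ^ r)) hu0 (by simp) hu hA
      (by positivity) ?_ r
    obtain ⟨c, hc⟩ : (2 : ℤ) ^ m ∣ a 2 := hAb ▸ (pow_dvd_pow 2 hmt).mul_right b
    have hc0 : c ≠ 0 := by rintro rfl; simp [hc] at hA
    have hc1 : c ≠ 1 := by rintro rfl; simp [hc] at h2
    have hc2 : c ≠ -1 := by rintro rfl; simp [hc] at h2'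
    have hcsq : 4 ≤ c ^ 2 := by
      rcases (by omega : 2 ≤ c ∨ c ≤ -2) with h | h <;> nlinarith
    have hpow : (2 : ℤ) ^ (m + m - 1) ≤ (2 ^ m) ^ 2 := by
      rw [← pow_mul]
      exact pow_le_pow_right₀ one_le_two (by omega)
    rw [hc, mul_pow]
    nlinarith [sq_nonneg ((2 : ℤ) ^ m)]
end

section
/- Let N ≥ 1 with 3 ∤ N and let k ≥ 2 be an even integer. Let a : ℕ → ℤ satisfy a(p^0) = 1 and a(p^(r+2)) = a(p)·a(p^(r+1)) − p^(k−1)·a(p^r) for every prime p not dividing N and every r ≥ 0. If a(3) ≠ 3^(k/2) and a(3) ≠ −3^(k/2), then either a(3) = 0 or a(3^r) ≠ 0 for all r ≥ 1. -/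
/-- A Lucas sequence whose discriminant `t ^ 2 - 4 * q` is nonnegative never vanishes. -/
lemma lucas_ne_zero_of_four_mul_le_sq {u : ℕ → ℤ} {t q : ℤ} (h0 : u 0 = 1) (h1 : u 1 = t)
    (hrec : ∀ r, u (r + 2) = t * u (r + 1) - q * u r) (ht : t ≠ 0) (hq : 0 ≤ q)
    (hd : 4 * q ≤ t ^ 2) (r : ℕ) : u r ≠ 0 := by
  have growth : ∀ r, |t| * |u r| ≤ 2 * |u (r + 1)| := by
    intro r
    induction r with
    | zero => simp [h0, h1]; linarith [abs_nonneg t]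
    | succ r ih =>
      have htri : |t * u (r + 1)| - |q * u r| ≤ |u (r + 2)| := by
        rw [hrec]; exact abs_sub_abs_le_abs_sub _ _
      rw [abs_mul, abs_mul, abs_of_nonneg hq] at htri
      have hd' := mul_le_mul_of_nonneg_right hd (abs_nonneg (u r))
      rw [← sq_abs t] at hd'
      have ih' := mul_le_mul_of_nonneg_left ih (abs_nonneg t)
      change |t| * |u (r + 1)| ≤ 2 * |u (r + 2)|
      linarith
  induction r with
  | zero => simp [h0]
  | succ r ih =>
    have hpos : 0 < |t| * |u r| := mul_pos (abs_pos.2 ht) (abs_pos.2 ih)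
    exact abs_pos.1 (by linarith [growth r])

/-- A Lucas sequence with parameters `d * c` and `d ^ 2 * (p * e)`, where `p` is a prime not
dividing `c`, never vanishes: its `r`-th term is `d ^ r` times an integer prime to `p`. -/
lemma lucas_ne_zero_of_not_dvd {u : ℕ → ℤ} {p d c e : ℤ} (hp : Prime p) (hc : ¬ p ∣ c)
    (hd : d ≠ 0) (h0 : u 0 = 1) (h1 : u 1 = d * c)
    (hrec : ∀ r, u (r + 2) = d * c * u (r + 1) - d ^ 2 * (p * e) * u r) (r : ℕ) :
    u r ≠ 0 := by
  have key : ∀ r, (∃ w, u r = d ^ r * w ∧ ¬ p ∣ w) ∧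
      ∃ w, u (r + 1) = d ^ (r + 1) * w ∧ ¬ p ∣ w := by
    intro r
    induction r with
    | zero => exact ⟨⟨1, by simp [h0], hp.not_dvd_one⟩, c, by simp [h1], hc⟩
    | succ r ih =>
      obtain ⟨⟨w, hw, -⟩, w', hw', hpw'⟩ := ih
      refine ⟨⟨w', hw', hpw'⟩, c * w' - p * (e * w), ?_, fun h => ?_⟩
      · rw [hrec, hw, hw']; ring
      · rw [dvd_sub_left (dvd_mul_right _ _)] at h
        exact (hp.dvd_or_dvd h).elim hc hpw'
  obtain ⟨w, hw, hpw⟩ := (key r).1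
  rw [hw]
  exact mul_ne_zero (pow_ne_zero _ hd) (by rintro rfl; exact hpw (dvd_zero p))

/-- If `3 ∤ N`, `k ≥ 2` is even, `a : ℕ → ℤ` satisfies the Hecke relations at primes
not dividing `N`, and `a 3 ≠ ±3^(k/2)`, then either `a 3 = 0` or `a (3^r) ≠ 0` for
all `r ≥ 1`. -/
theorem stmt_4 (N : ℕ) (hN : 1 ≤ N) (hN3 : ¬ (3 ∣ N)) (k : ℕ) (hk : 2 ≤ k) (hke : Even k)
    (a : ℕ → ℤ)
    (hone : ∀ p : ℕ, p.Prime → ¬ p ∣ N → a (p ^ 0) = 1)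
    (hrec : ∀ p : ℕ, p.Prime → ¬ p ∣ N → ∀ r : ℕ,
      a (p ^ (r + 2)) = a p * a (p ^ (r + 1)) - (p : ℤ) ^ (k - 1) * a (p ^ r))
    (h3 : a 3 ≠ 3 ^ (k / 2)) (h3' : a 3 ≠ -(3 ^ (k / 2))) :
    a 3 = 0 ∨ ∀ r : ℕ, 1 ≤ r → a (3 ^ r) ≠ 0 := by
  rw [or_iff_not_imp_left]
  intro ht r _
  have h0 : a (3 ^ 0) = 1 := hone 3 Nat.prime_three hN3
  have hrec3 := hrec 3 Nat.prime_three hN3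
  push_cast at hrec3
  have h1 : a (3 ^ 1) = a 3 := by rw [pow_one]
  obtain ⟨m, rfl⟩ : ∃ m, k = 2 * m + 2 := by
    obtain ⟨j, rfl⟩ := hke
    exact ⟨j - 1, by omega⟩
  rw [show (2 * m + 2) / 2 = m + 1 by omega] at h3 h3'
  rw [show 2 * m + 2 - 1 = 2 * m + 1 by omega] at hrec3
  by_cases hdvd : (3 : ℤ) ^ (m + 1) ∣ a 3
  · obtain ⟨s, hs⟩ := hdvd
    refine lucas_ne_zero_of_four_mul_le_sq (u := fun r => a (3 ^ r)) h0 h1 hrec3 ht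
      (by positivity) ?_ r
    have hs0 : s ≠ 0 := by rintro rfl; simp [hs] at ht
    have hs1 : s ≠ 1 := by rintro rfl; simp [hs] at h3
    have hs2 : s ≠ -1 := by rintro rfl; simp [hs] at h3'
    have hsq : 4 ≤ s ^ 2 := by
      rcases (by omega : s ≤ -2 ∨ 2 ≤ s) with h | h <;> nlinarith
    have hpow : (0 : ℤ) < 3 ^ (2 * m + 1) := by positivity
    calc 4 * (3 : ℤ) ^ (2 * m + 1) ≤ 3 ^ (2 * m + 1) * (3 * s ^ 2) := by nlinarith
      _ = a 3 ^ 2 := by rw [hs]; ring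
  · obtain ⟨c, hc, hpc⟩ := (Int.finiteMultiplicity_iff.2
      ⟨by decide, ht⟩ : FiniteMultiplicity (3 : ℤ) (a 3)).exists_eq_pow_mul_and_not_dvd
    set v := multiplicity (3 : ℤ) (a 3)
    have hv : v ≤ m := by
      by_contra! h
      exact hdvd (hc ▸ (pow_dvd_pow 3 h).mul_right c)
    obtain ⟨n, hn⟩ := Nat.exists_eq_add_of_le hv
    refine lucas_ne_zero_of_not_dvd (u := fun r => a (3 ^ r)) (e := 3 ^ (2 * n))
      Int.prime_three hpc (pow_ne_zero v three_ne_zero) h0 (h1.trans hc) (fun r => ?_) r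
    rw [← hc]
    rw [hrec3, hn]
    ring
end

section
/- Let N ≥ 1 and let k ≥ 2 be an even integer. Let a : ℕ → ℤ satisfy: a(1) = 1; a(mn) = a(m)·a(n) for all coprime positive integers m, n; a(p^(r+2)) = a(p)·a(p^(r+1)) − p^(k−1)·a(p^r) for every prime p ∤ N and every r ≥ 0; and a(p^(r+1)) = a(p)·a(p^r) for every prime p | N and every r ≥ 0. If n is the smallest positive integer with gcd(n, 6) = 1 and a(n) = 0, then n is prime. -/
/-- If a Lucas sequence `u` with integer parameters `P`, `Q ≠ 0` has a vanishing term, then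
`P ^ 2 / Q` is an integer between `0` and `4`. -/
theorem exists_sq_eq_mul_of_lucas_eq_zero {P Q : ℤ} (hQ : Q ≠ 0) {u : ℕ → ℤ} (h0 : u 0 = 1)
    (h1 : u 1 = P) (hu : ∀ r, u (r + 2) = P * u (r + 1) - Q * u r) {r : ℕ} (hr : u r = 0) :
    ∃ c : ℤ, 0 ≤ c ∧ c ≤ 4 ∧ P ^ 2 = c * Q := by
  obtain ⟨s, hs⟩ := IsAlgClosed.exists_pow_nat_eq ((P : ℂ) ^ 2 - 4 * Q) (n := 2) (by norm_num)
  obtain ⟨α, β, hsum, hprod⟩ : ∃ α β : ℂ, α + β = P ∧ α * β = Q :=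
    ⟨(P + s) / 2, (P - s) / 2, by ring, by linear_combination -hs / 4⟩
  have hQ' : (Q : ℂ) ≠ 0 := by exact_mod_cast hQ
  have hα : α ≠ 0 := by rintro rfl; simp [eq_comm, hQ] at hprod
  have hβ : β ≠ 0 := by rintro rfl; simp [eq_comm, hQ] at hprod
  have binet : ∀ n, (u n : ℂ) * (α - β) = α ^ (n + 1) - β ^ (n + 1) := by
    intro n
    induction n using Nat.twoStepInduction with
    | zero => simp [h0]
    | one => rw [h1, ← hsum]; ring
    | more n ih ih' =>
      rw [hu]
      push_cast
      rw [← hsum, ← hprod]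
      linear_combination (α + β) * ih' - α * β * ih
  by_cases hαβ : α = β
  · refine ⟨4, by norm_num, le_rfl, ?_⟩
    have : (P : ℂ) ^ 2 = 4 * Q := by rw [← hsum, ← hprod, hαβ]; ring
    exact_mod_cast this
  have hpow : (α / β) ^ (r + 1) = 1 := by
    have := binet r
    rw [hr, Int.cast_zero, zero_mul] at this
    rw [div_pow, div_eq_one_iff_eq (pow_ne_zero _ hβ)]
    exact (sub_eq_zero.mp this.symm)
  have hpow_inv : (α / β)⁻¹ ^ (r + 1) = 1 := by rw [inv_pow, hpow, inv_one]
  have hint : IsIntegral ℤ (α / β + (α / β)⁻¹) :=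
    (IsIntegral.of_pow r.succ_pos (by rw [hpow]; exact isIntegral_one)).add
      (IsIntegral.of_pow r.succ_pos (by rw [hpow_inv]; exact isIntegral_one))
  have htrace : α / β + (α / β)⁻¹ = algebraMap ℚ ℂ ((P ^ 2 - 2 * Q) / Q) := by
    simp only [eq_ratCast]
    push_cast
    rw [← hsum, ← hprod]
    field_simp
    ring
  rw [htrace, isIntegral_algebraMap_iff (algebraMap ℚ ℂ).injective,
    IsIntegrallyClosed.isIntegral_iff] at hint
  obtain ⟨t, ht⟩ := hint
  have htC : α / β + (α / β)⁻¹ = t := by rw [htrace, ← ht]; simp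
  have hnorm : ‖(t : ℂ)‖ ≤ 2 := by
    have hx := Complex.norm_eq_one_of_pow_eq_one hpow r.succ_ne_zero
    rw [← htC]
    calc _ ≤ ‖α / β‖ + ‖(α / β)⁻¹‖ := norm_add_le _ _
      _ = 2 := by rw [norm_inv, hx]; norm_num
  have habs : |t| ≤ 2 := by
    rw [Complex.norm_intCast] at hnorm
    exact_mod_cast hnorm
  obtain ⟨hlow, hupp⟩ := abs_le.mp habs
  refine ⟨t + 2, by linarith, by linarith, ?_⟩
  have hQq : (Q : ℚ) ≠ 0 := by exact_mod_cast hQ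
  rw [eq_intCast, eq_div_iff hQq] at ht
  have : (t : ℤ) * Q = P ^ 2 - 2 * Q := by exact_mod_cast ht
  linear_combination -this

/-- A nonzero integer square is not `c * p ^ m` with `m` odd and `|c|` smaller than the prime
`p`. -/
theorem sq_ne_mul_prime_pow_of_odd {p : ℕ} (hp : p.Prime) {m : ℕ} (hm : Odd m) {P c : ℤ}
    (hP : P ≠ 0) (hc : |c| < p) : P ^ 2 ≠ c * (p : ℤ) ^ m := by
  intro h
  have : Fact p.Prime := ⟨hp⟩
  have hp0 : (p : ℤ) ≠ 0 := by exact_mod_cast hp.ne_zero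
  have hc0 : c ≠ 0 := by rintro rfl; simp [hP] at h
  have hcval : padicValInt p c = 0 := padicValInt.eq_zero_of_not_dvd fun hd =>
    hc0 (Int.eq_zero_of_abs_lt_dvd hd hc)
  have hpval : padicValInt p ((p : ℤ) ^ m) = m := by
    rw [← Nat.cast_pow, padicValInt.of_nat, padicValNat.prime_pow]
  have hval := congrArg (padicValInt p) h
  rw [sq, padicValInt.mul hP hP, padicValInt.mul hc0 (pow_ne_zero _ hp0), hcval, hpval] at hval
  obtain ⟨j, rfl⟩ := hm
  omega

/-- The least positive integer coprime to `d` at which a multiplicative function vanishes is a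
prime power. -/
theorem exists_eq_prime_pow_of_minimal_zero {a : ℕ → ℤ} {d n : ℕ} (ha1 : a 1 = 1)
    (hmul : ∀ m n : ℕ, 0 < m → 0 < n → Nat.Coprime m n → a (m * n) = a m * a n)
    (hn : 0 < n) (hcop : Nat.gcd n d = 1) (han : a n = 0)
    (hmin : ∀ m : ℕ, 0 < m → m < n → Nat.gcd m d = 1 → a m ≠ 0) :
    ∃ p r : ℕ, p.Prime ∧ n = p ^ (r + 1) := by
  have hn1 : n ≠ 1 := by rintro rfl; simp [ha1] at han
  have hp := Nat.minFac_prime hn1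
  obtain ⟨r, m, hpm, hnm⟩ := Nat.exists_eq_pow_mul_and_not_dvd hn.ne' n.minFac hp.ne_one
  have hdvd := n.minFac_dvd
  generalize n.minFac = p at *
  subst hnm
  have hm : 0 < m := Nat.pos_of_mul_pos_left hn
  have hpr : 0 < p ^ r := pow_pos hp.pos r
  have hr : r ≠ 0 := by rintro rfl; simp at hdvd; exact hpm hdvd
  obtain ⟨r, rfl⟩ := Nat.exists_eq_succ_of_ne_zero hr
  refine ⟨p, r, hp, ?_⟩
  by_contra hne
  have hm1 : 1 < m := by
    have : m ≠ 1 := by rintro rfl; simp at hne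
    omega
  have hpr1 : 1 < p ^ (r + 1) := Nat.one_lt_pow r.succ_ne_zero hp.one_lt
  rw [hmul _ _ hpr hm (((Nat.Prime.coprime_iff_not_dvd hp).mpr hpm).pow_left _)] at han
  rcases mul_eq_zero.mp han with h | h
  · exact hmin _ hpr (by simpa using (Nat.mul_lt_mul_left hpr).mpr hm1)
      (Nat.Coprime.coprime_mul_right hcop) h
  · exact hmin _ hm (by simpa using (Nat.mul_lt_mul_right hm).mpr hpr1)
      (Nat.Coprime.coprime_mul_left hcop) h


/-- For an integer-valued sequence satisfying the Hecke relations of a primitive form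
of even weight `k` and level `N` with trivial character, the smallest positive integer
`n` with `gcd(n, 6) = 1` and `a n = 0` is prime. -/
theorem stmt_5 (N : ℕ) (hN : 1 ≤ N) (k : ℕ) (hk : 2 ≤ k) (hke : Even k)
    (a : ℕ → ℤ) (ha1 : a 1 = 1)
    (hmul : ∀ m n : ℕ, 0 < m → 0 < n → Nat.Coprime m n → a (m * n) = a m * a n)
    (hrec : ∀ p : ℕ, p.Prime → ¬ p ∣ N → ∀ r : ℕ,
      a (p ^ (r + 2)) = a p * a (p ^ (r + 1)) - (p : ℤ) ^ (k - 1) * a (p ^ r))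
    (hdvd : ∀ p : ℕ, p.Prime → p ∣ N → ∀ r : ℕ, a (p ^ (r + 1)) = a p * a (p ^ r))
    (n : ℕ) (hn : 0 < n) (hcop : Nat.gcd n 6 = 1) (han : a n = 0)
    (hmin : ∀ m : ℕ, 0 < m → m < n → Nat.gcd m 6 = 1 → a m ≠ 0) :
    n.Prime := by
  obtain ⟨p, r, hp, rfl⟩ := exists_eq_prime_pow_of_minimal_zero ha1 hmul hn hcop han hmin
  rcases Nat.eq_zero_or_pos r with rfl | hr
  · simpa using hp
  have hp6 : Nat.Coprime p 6 := (Nat.coprime_pow_left_iff r.succ_pos _ _).mp hcop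
  have hp5 : 5 ≤ p := by
    by_contra! hlt
    interval_cases p <;> revert hp hp6 <;> decide
  have hap : a p ≠ 0 :=
    hmin p hp.pos (by simpa using Nat.pow_lt_pow_right hp.one_lt (show 1 < r + 1 by omega)) hp6
  exfalso
  by_cases hpN : p ∣ N
  · have hpow : ∀ j, a (p ^ j) = a p ^ j := by
      intro j
      induction j with
      | zero => simp [ha1]
      | succ j ih => rw [hdvd p hp hpN, ih, pow_succ']
    rw [hpow] at han
    exact pow_ne_zero _ hap han
  · have hp0 : (p : ℤ) ≠ 0 := by exact_mod_cast hp.ne_zero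
    obtain ⟨c, hc0, hc4, hc⟩ := exists_sq_eq_mul_of_lucas_eq_zero (P := a p)
      (pow_ne_zero (k - 1) hp0) (u := fun j => a (p ^ j)) (by simp [ha1]) (by simp)
      (hrec p hp hpN) han
    refine sq_ne_mul_prime_pow_of_odd hp (Nat.Even.sub_odd (by omega) hke odd_one) hap ?_ hc
    rw [abs_of_nonneg hc0]
    omega
end

section
/- Let N ≥ 1 be divisible by 6 and let k ≥ 2 be an even integer. Let a : ℕ → ℤ satisfy: a(1) = 1; a(mn) = a(m)·a(n) for all coprime positive integers m, n; a(p^(r+2)) = a(p)·a(p^(r+1)) − p^(k−1)·a(p^r) for every prime p ∤ N and every r ≥ 0; and a(p^(r+1)) = a(p)·a(p^r) for every prime p | N and every r ≥ 0. If n is the smallest positive integer with a(n) = 0 (i.e. a(n) = 0 and a(m) ≠ 0 for all 1 ≤ m < n), then n is prime. -/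
/-- A Lucas sequence whose discriminant `A ^ 2 - 4 * Q` is nonnegative does not vanish. -/
theorem lucas_ne_zero_of_four_mul_le_sq_s6 {A Q : ℤ} (hA : A ≠ 0) (hQ : 0 ≤ Q)
    (h : 4 * Q ≤ A ^ 2) {x : ℕ → ℤ} (h0 : x 0 = 1) (h1 : x 1 = A)
    (hx : ∀ r, x (r + 2) = A * x (r + 1) - Q * x r) (r : ℕ) : x r ≠ 0 := by
  have hApos : 0 < |A| := abs_pos.mpr hA
  have growth : ∀ r, |A| * |x r| ≤ 2 * |x (r + 1)| := by
    intro r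
    induction r with
    | zero => simp only [zero_add, h0, h1, abs_one]; linarith
    | succ r ih =>
      have htri : |A| * |x (r + 1)| - Q * |x r| ≤ |x (r + 2)| := by
        rw [hx, ← abs_mul, ← abs_of_nonneg hQ, ← abs_mul, abs_of_nonneg hQ]
        exact abs_sub_abs_le_abs_sub _ _
      have hQA : 2 * Q * |x r| ≤ |A| * |x (r + 1)| := by
        have hsq : 4 * Q * |x r| ≤ |A| ^ 2 * |x r| := by
          rw [sq_abs]; exact mul_le_mul_of_nonneg_right h (abs_nonneg _)
        nlinarith [mul_le_mul_of_nonneg_left ih hApos.le]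
      linarith
  induction r with
  | zero => simp [h0]
  | succ r ih =>
    have hpos := mul_pos hApos (abs_pos.mpr ih)
    exact abs_pos.mp (by linarith [growth r])

/-- A Lucas sequence with parameters `p ^ v * B` and `p ^ m`, where `p ∤ B` and `2 * v < m`,
does not vanish: its `r`-th term has `p`-adic valuation exactly `r * v`. -/
theorem lucas_ne_zero_of_two_mul_lt {p : ℕ} (hp : p.Prime) {v m : ℕ} (hvm : 2 * v < m)
    {B : ℤ} (hB : ¬ (p : ℤ) ∣ B) {x : ℕ → ℤ} (h0 : x 0 = 1) (h1 : x 1 = p ^ v * B)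
    (hx : ∀ r, x (r + 2) = p ^ v * B * x (r + 1) - p ^ m * x r) (r : ℕ) : x r ≠ 0 := by
  have hpp : Prime (p : ℤ) := Nat.prime_iff_prime_int.mp hp
  obtain ⟨e, rfl⟩ : ∃ e, m = 2 * v + (e + 1) := ⟨m - 2 * v - 1, by omega⟩
  have shape : ∀ r, ∃ y z : ℤ, x r = (p : ℤ) ^ (r * v) * y ∧
      x (r + 1) = (p : ℤ) ^ ((r + 1) * v) * z ∧ ¬ (p : ℤ) ∣ y ∧ ¬ (p : ℤ) ∣ z := by
    intro r
    induction r with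
    | zero => exact ⟨1, B, by simp [h0], by simp [h1], hpp.not_dvd_one, hB⟩
    | succ r ih =>
      obtain ⟨y, z, hy, hz, -, hpz⟩ := ih
      refine ⟨z, B * z - p ^ (e + 1) * y, hz, ?_, hpz, fun hdvd => ?_⟩
      · rw [hx, hy, hz]; ring
      · have hpow : (p : ℤ) ∣ p ^ (e + 1) * y := (dvd_pow_self _ e.succ_ne_zero).mul_right _
        exact (hpp.dvd_or_dvd ((dvd_sub_left hpow).mp hdvd)).elim hB hpz
  obtain ⟨y, -, hy, -, hpy, -⟩ := shape r
  rw [hy]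
  exact mul_ne_zero (pow_ne_zero _ hpp.ne_zero) fun h => hpy (h ▸ dvd_zero _)

/-- For a prime `p ≥ 4` and odd `m`, a Lucas sequence with parameters `A ≠ 0` and `p ^ m`
does not vanish. -/
theorem lucas_prime_pow_ne_zero {p : ℕ} (hp : p.Prime) (hp4 : 4 ≤ p) {m : ℕ} (hm : Odd m)
    {A : ℤ} (hA : A ≠ 0) {x : ℕ → ℤ} (h0 : x 0 = 1) (h1 : x 1 = A)
    (hx : ∀ r, x (r + 2) = A * x (r + 1) - p ^ m * x r) (r : ℕ) : x r ≠ 0 := by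
  have hpp : Prime (p : ℤ) := Nat.prime_iff_prime_int.mp hp
  obtain ⟨B, hAB, hB⟩ :=
    (FiniteMultiplicity.of_prime_left hpp hA).exists_eq_pow_mul_and_not_dvd
  generalize multiplicity (p : ℤ) A = v at hAB
  subst hAB
  rcases lt_or_ge (2 * v) m with hvm | hvm
  · exact lucas_ne_zero_of_two_mul_lt hp hvm hB h0 h1 hx r
  · refine lucas_ne_zero_of_four_mul_le_sq_s6 hA (by positivity) ?_ h0 h1 hx r
    have hmv : m + 1 ≤ 2 * v := by obtain ⟨j, rfl⟩ := hm; omega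
    have hp4' : (4 : ℤ) ≤ p := by exact_mod_cast hp4
    have hB0 : B ≠ 0 := fun h => hB (h ▸ dvd_zero _)
    calc 4 * (p : ℤ) ^ m ≤ p * p ^ m := by gcongr
      _ = p ^ (m + 1) := by ring
      _ ≤ p ^ (2 * v) := pow_le_pow_right₀ (by linarith) hmv
      _ ≤ p ^ (2 * v) * B ^ 2 :=
        le_mul_of_one_le_right (by positivity) (by have := sq_pos_of_ne_zero hB0; linarith)
      _ = (p ^ v * B) ^ 2 := by ring

/-- For an integer-valued sequence satisfying the Hecke relations of a primitive form
of even weight `k` and level `N` with trivial character, if `6 ∣ N` then the smallest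
positive integer `n` with `a n = 0` is prime. -/
theorem stmt_6 (N : ℕ) (hN : 1 ≤ N) (h6 : 6 ∣ N) (k : ℕ) (hk : 2 ≤ k) (hke : Even k)
    (a : ℕ → ℤ) (ha1 : a 1 = 1)
    (hmul : ∀ m n : ℕ, 0 < m → 0 < n → Nat.Coprime m n → a (m * n) = a m * a n)
    (hrec : ∀ p : ℕ, p.Prime → ¬ p ∣ N → ∀ r : ℕ,
      a (p ^ (r + 2)) = a p * a (p ^ (r + 1)) - (p : ℤ) ^ (k - 1) * a (p ^ r))
    (hdvd : ∀ p : ℕ, p.Prime → p ∣ N → ∀ r : ℕ, a (p ^ (r + 1)) = a p * a (p ^ r))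
    (n : ℕ) (hn : 0 < n) (han : a n = 0)
    (hmin : ∀ m : ℕ, 1 ≤ m → m < n → a m ≠ 0) :
    n.Prime := by
  have hn1 : n ≠ 1 := by rintro rfl; simp [ha1] at han
  have hp : n.minFac.Prime := Nat.minFac_prime hn1
  obtain ⟨r, s, hps, hnrs⟩ := Nat.exists_eq_pow_mul_and_not_dvd hn.ne' n.minFac hp.ne_one
  have hpn : n.minFac ∣ n := n.minFac_dvd
  generalize n.minFac = p at *
  have hs : 0 < s := Nat.pos_of_ne_zero (by rintro rfl; exact hps (dvd_zero _))
  have hr : r ≠ 0 := by rintro rfl; rw [hnrs, pow_zero, one_mul] at hpn; exact hps hpn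
  have hpr : 1 < p ^ r := Nat.one_lt_pow hr hp.one_lt
  obtain rfl : s = 1 := by
    by_contra hs1
    rw [hnrs, hmul _ _ (by omega) hs
      (Nat.Coprime.pow_left _ ((Nat.Prime.coprime_iff_not_dvd hp).mpr hps))] at han
    have hs2 : 1 < s := by omega
    rcases mul_eq_zero.mp han with h | h
    · exact hmin _ hpr.le (hnrs ▸ lt_mul_of_one_lt_right (by omega) hs2) h
    · exact hmin _ hs (hnrs ▸ lt_mul_of_one_lt_left hs hpr) h
  rw [mul_one] at hnrs
  subst hnrs
  by_contra hnp
  have hr2 : 1 < r := by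
    by_contra h
    obtain rfl : r = 1 := by omega
    exact hnp (by simpa using hp)
  have hap : a p ≠ 0 := hmin p hp.one_lt.le (by simpa using Nat.pow_lt_pow_right hp.one_lt hr2)
  by_cases hpN : p ∣ N
  · obtain ⟨t, rfl⟩ : ∃ t, r = t + 1 := ⟨r - 1, by omega⟩
    rw [hdvd p hp hpN] at han
    exact mul_ne_zero hap (hmin _ (Nat.one_le_pow _ _ hp.pos)
      (Nat.pow_lt_pow_right hp.one_lt t.lt_succ_self)) han
  · have hp4 : 4 ≤ p := by
      by_contra! h
      have hp2 := hp.two_le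
      exact hpN (Dvd.dvd.trans (by interval_cases p <;> norm_num) h6)
    exact lucas_prime_pow_ne_zero hp hp4 (Nat.Even.sub_odd (by omega) hke odd_one) hap
      (x := fun r => a (p ^ r)) (by simp [ha1]) (by simp) (hrec p hp hpN) r han
end

section
/- Let N ≥ 1 and let k ≥ 2 be an even integer. Let a : ℕ → ℤ satisfy: a(1) = 1; a(mn) = a(m)·a(n) for all coprime positive integers m, n; a(p^(r+2)) = a(p)·a(p^(r+1)) − p^(k−1)·a(p^r) for every prime p ∤ N and every r ≥ 0; and a(p^(r+1)) = a(p)·a(p^r) for every prime p | N and every r ≥ 0. Suppose a(2) ∉ {2^(k/2), −2^(k/2)} and a(3) ∉ {3^(k/2), −3^(k/2)}. If n is the smallest positive integer with a(n) = 0 (i.e. a(n) = 0 and a(m) ≠ 0 for all 1 ≤ m < n), then n is prime. -/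
/-- If `A = p ^ v * c` with `p ∤ c` and `2 * v < m`, then the Lucas sequence with parameters
`(A, p ^ m)` satisfies `v_p (u r) = r * v`; in particular it never vanishes. -/
theorem lucas_ne_zero_of_padic_small {p : ℤ} (hp : Prime p) {u : ℕ → ℤ} {c : ℤ} {v m : ℕ}
    (hc : ¬ p ∣ c) (hvm : 2 * v < m) (hu0 : u 0 = 1) (hu1 : u 1 = p ^ v * c)
    (hu : ∀ r, u (r + 2) = p ^ v * c * u (r + 1) - p ^ m * u r) (r : ℕ) : u r ≠ 0 := by
  obtain ⟨d, rfl⟩ := Nat.exists_eq_add_of_lt hvm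
  have key : ∀ r, (∃ w, u r = p ^ (r * v) * w ∧ ¬ p ∣ w) ∧
      ∃ w, u (r + 1) = p ^ ((r + 1) * v) * w ∧ ¬ p ∣ w := by
    intro r
    induction r with
    | zero => exact ⟨⟨1, by simp [hu0], hp.not_dvd_one⟩, ⟨c, by simp [hu1], hc⟩⟩
    | succ r ih =>
      obtain ⟨⟨w₀, hw₀, -⟩, w₁, hw₁, hpw₁⟩ := ih
      refine ⟨⟨w₁, hw₁, hpw₁⟩, c * w₁ - p ^ (d + 1) * w₀, ?_, fun h => ?_⟩
      · rw [hu, hw₀, hw₁]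
        ring
      · have h' : p ∣ c * w₁ :=
          (dvd_sub_left ((dvd_pow_self p d.succ_ne_zero).mul_right w₀)).mp h
        exact (hp.dvd_or_dvd h').elim hc hpw₁
  obtain ⟨⟨w, hw, hpw⟩, -⟩ := key r
  rw [hw]
  exact mul_ne_zero (pow_ne_zero _ hp.ne_zero) fun h => hpw (h ▸ dvd_zero p)

/-- A Lucas sequence with parameters `(A, B)`, `A ≠ 0`, `B ≥ 0` and nonnegative discriminant
`A ^ 2 - 4 * B` never vanishes. -/
theorem lucas_ne_zero_of_discrim_nonneg_s7 {u : ℕ → ℤ} {A B : ℤ} (hA : A ≠ 0) (hB : 0 ≤ B)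
    (hAB : 4 * B ≤ A ^ 2) (hu0 : u 0 = 1) (hu1 : u 1 = A)
    (hu : ∀ r, u (r + 2) = A * u (r + 1) - B * u r) (r : ℕ) : u r ≠ 0 := by
  have hA' : 0 < |A| := abs_pos.mpr hA
  have key : ∀ r, 0 < |u r| ∧ |A| * |u r| ≤ 2 * |u (r + 1)| := by
    intro r
    induction r with
    | zero => simp [hu0, hu1]; linarith
    | succ r ih =>
      obtain ⟨h0, h1⟩ := ih
      have hpos : 0 < |u (r + 1)| := by nlinarith [mul_pos hA' h0]
      refine ⟨hpos, ?_⟩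
      have htri : |A| * |u (r + 1)| - B * |u r| ≤ |u (r + 2)| := by
        have h := abs_sub_abs_le_abs_sub (A * u (r + 1)) (B * u r)
        rwa [abs_mul, abs_mul, abs_of_nonneg hB, ← hu] at h
      have hB2 : 2 * (B * |u r|) ≤ |A| * |u (r + 1)| := by
        rw [← sq_abs] at hAB
        have e1 := mul_le_mul_of_nonneg_right hAB h0.le
        have e2 := mul_le_mul_of_nonneg_left h1 hA'.le
        nlinarith
      linarith
  exact abs_pos.mp (key r).1

/-- A Lucas sequence with parameters `(A, p ^ (2 * j - 1))`, where `A ≠ 0` and `A` is not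
`± p ^ j` for `p = 2, 3`, never vanishes. -/
theorem hecke_prime_pow_ne_zero {p j : ℕ} (hp : p.Prime) (hj : 1 ≤ j) {u : ℕ → ℤ} {A : ℤ}
    (hA : A ≠ 0) (hsmall : p = 2 ∨ p = 3 → A ≠ (p : ℤ) ^ j ∧ A ≠ -(p : ℤ) ^ j)
    (hu0 : u 0 = 1) (hu1 : u 1 = A)
    (hu : ∀ r, u (r + 2) = A * u (r + 1) - (p : ℤ) ^ (2 * j - 1) * u r) (r : ℕ) :
    u r ≠ 0 := by
  have hpZ : Prime (p : ℤ) := Nat.prime_iff_prime_int.mp hp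
  have hp2 : (2 : ℤ) ≤ p := by exact_mod_cast hp.two_le
  by_cases hdvd : (p : ℤ) ^ j ∣ A
  · obtain ⟨c, rfl⟩ := hdvd
    have hc : c ≠ 0 := right_ne_zero_of_mul hA
    have hB : (0 : ℤ) ≤ (p : ℤ) ^ (2 * j - 1) := by positivity
    refine lucas_ne_zero_of_discrim_nonneg_s7 hA hB ?_ hu0 hu1 hu r
    have hsq : ((p : ℤ) ^ j * c) ^ 2 = (p : ℤ) ^ (2 * j - 1) * (p * c ^ 2) := by
      obtain ⟨i, rfl⟩ := Nat.exists_eq_add_of_le' hj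
      rw [show 2 * (i + 1) - 1 = 2 * i + 1 by omega]
      ring
    have h4 : (4 : ℤ) ≤ p * c ^ 2 := by
      have hc1 : 1 ≤ c ^ 2 := Int.add_one_le_of_lt (sq_pos_iff.mpr hc)
      by_cases hs : p = 2 ∨ p = 3
      · obtain ⟨hne, hne'⟩ := hsmall hs
        have hc2 : c ≠ 1 := fun h => hne (by simp [h])
        have hc3 : c ≠ -1 := fun h => hne' (by simp [h])
        have : 4 ≤ c ^ 2 := by
          rcases (by omega : 2 ≤ c ∨ c ≤ -2) with h | h <;> nlinarith
        nlinarith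
      · have : (4 : ℤ) ≤ p := by have := hp.two_le; omega
        nlinarith
    rw [hsq, mul_comm]
    exact mul_le_mul_of_nonneg_left h4 hB
  · have hfin : FiniteMultiplicity (p : ℤ) A :=
      Int.finiteMultiplicity_iff.mpr ⟨by simpa using hp.ne_one, hA⟩
    obtain ⟨c, hAc, hc⟩ := hfin.exists_eq_pow_mul_and_not_dvd
    generalize multiplicity (p : ℤ) A = v at hAc
    subst hAc
    have hv : v < j := by
      by_contra! h
      exact hdvd ((pow_dvd_pow _ h).mul_right c)
    exact lucas_ne_zero_of_padic_small hpZ hc (by omega) hu0 hu1 hu r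

/-- For an integer-valued sequence satisfying the Hecke relations of a primitive form
of even weight `k` and level `N` with trivial character, if `a 2 ≠ ±2^(k/2)` and
`a 3 ≠ ±3^(k/2)`, then the smallest positive integer `n` with `a n = 0` is prime. -/
theorem stmt_7 (N : ℕ) (hN : 1 ≤ N) (k : ℕ) (hk : 2 ≤ k) (hke : Even k)
    (a : ℕ → ℤ) (ha1 : a 1 = 1)
    (hmul : ∀ m n : ℕ, 0 < m → 0 < n → Nat.Coprime m n → a (m * n) = a m * a n)
    (hrec : ∀ p : ℕ, p.Prime → ¬ p ∣ N → ∀ r : ℕ,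
      a (p ^ (r + 2)) = a p * a (p ^ (r + 1)) - (p : ℤ) ^ (k - 1) * a (p ^ r))
    (hdvd : ∀ p : ℕ, p.Prime → p ∣ N → ∀ r : ℕ, a (p ^ (r + 1)) = a p * a (p ^ r))
    (h2 : a 2 ≠ 2 ^ (k / 2)) (h2' : a 2 ≠ -(2 ^ (k / 2)))
    (h3 : a 3 ≠ 3 ^ (k / 2)) (h3' : a 3 ≠ -(3 ^ (k / 2)))
    (n : ℕ) (hn : 0 < n) (han : a n = 0)
    (hmin : ∀ m : ℕ, 1 ≤ m → m < n → a m ≠ 0) :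
    n.Prime := by
  obtain ⟨j, rfl⟩ := hke.two_dvd
  rw [Nat.mul_div_cancel_left j two_pos] at h2 h2' h3 h3'
  have hn1 : n ≠ 1 := by rintro rfl; simp [ha1] at han
  set p := n.minFac
  have hp : p.Prime := Nat.minFac_prime hn1
  obtain ⟨e, m, hpm, hnm⟩ := Nat.exists_eq_pow_mul_and_not_dvd hn.ne' p hp.ne_one
  have he : e ≠ 0 := by
    rintro rfl
    rw [pow_zero, one_mul] at hnm
    exact hpm (hnm ▸ n.minFac_dvd)
  have hm0 : 0 < m := Nat.pos_of_ne_zero fun h => hpm (h ▸ dvd_zero p)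
  have hpe : 1 < p ^ e := Nat.one_lt_pow he hp.one_lt
  have hm : m = 1 := by
    by_contra hm1
    have hmul' := hmul (p ^ e) m (by omega) hm0
      (Nat.Coprime.pow_left e ((Nat.Prime.coprime_iff_not_dvd hp).mpr hpm))
    rw [← hnm, han, eq_comm, mul_eq_zero] at hmul'
    rcases hmul' with h | h
    · exact hmin _ hpe.le (by rw [hnm]; exact lt_mul_of_one_lt_right (by omega) (by omega)) h
    · exact hmin m hm0 (by rw [hnm]; exact lt_mul_of_one_lt_left hm0 hpe) h
  have hnp : n = p ^ e := by rw [hnm, hm, mul_one]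
  have hpn : p ≤ n := n.minFac_le hn
  rcases hpn.eq_or_lt with h | h
  · exact h ▸ hp
  exfalso
  have hap : a p ≠ 0 := hmin p hp.one_le h
  rw [hnp] at han
  by_cases hpN : p ∣ N
  · have hpow : ∀ r, a (p ^ r) ≠ 0 := by
      intro r
      induction r with
      | zero => simp [ha1]
      | succ r ih => rw [hdvd p hp hpN]; exact mul_ne_zero hap ih
    exact hpow e han
  · refine hecke_prime_pow_ne_zero (u := fun r => a (p ^ r)) hp (by omega) hap ?_
      (by simp [ha1]) (by simp) (hrec p hp hpN) e han
    rintro (h | h) <;> rw [h]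
    · exact ⟨mod_cast h2, mod_cast h2'⟩
    · exact ⟨mod_cast h3, mod_cast h3'⟩
end

section
/- Let p be a prime, let k ≥ 2 be an even integer, and let α, β ∈ ℂ satisfy α·β = p^(k−1), α + β ∈ ℤ, α + β ≠ 0, and suppose α/β is a root of unity with α/β ≠ 1. Then either p = 2 and α + β = ±2^(k/2), or p = 3 and α + β = ±3^(k/2). -/
/-- If a prime `p` and an integer `0 < c < 4` satisfy `m ^ 2 = c * p ^ (2 * j + 1)`, then
`c = p ∈ {2, 3}` and `m = ± p ^ (j + 1)`. -/
lemma eq_two_or_three_of_sq_eq_mul_prime_pow {p : ℕ} (hp : p.Prime) {j : ℕ} {m c : ℤ}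
    (hc0 : 0 < c) (hc4 : c < 4) (h : m ^ 2 = c * (p : ℤ) ^ (2 * j + 1)) :
    (p = 2 ∨ p = 3) ∧ (m = (p : ℤ) ^ (j + 1) ∨ m = -(p : ℤ) ^ (j + 1)) := by
  have hpp : Prime (p : ℤ) := Nat.prime_iff_prime_int.mp hp
  have hp0 : (p : ℤ) ≠ 0 := hpp.ne_zero
  obtain ⟨n, rfl⟩ : (p : ℤ) ^ j ∣ m := by
    rw [← Int.pow_dvd_pow_iff two_ne_zero, h]
    exact ⟨c * p, by ring⟩
  have hn : n ^ 2 = c * p := by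
    refine mul_left_cancel₀ (pow_ne_zero 2 (pow_ne_zero j hp0)) ?_
    linear_combination h
  obtain ⟨r, rfl⟩ : (p : ℤ) ∣ n := hpp.dvd_of_dvd_pow (hn ▸ Dvd.intro_left c rfl)
  have hr : p * r ^ 2 = c := mul_right_cancel₀ hp0 (by linear_combination hn)
  have hp2 : (2 : ℤ) ≤ p := by exact_mod_cast hp.two_le
  have hr0 : 0 < r ^ 2 := pos_of_mul_pos_right (hr ▸ hc0) (by positivity)
  have hr1 : r ^ 2 = 1 := by nlinarith
  constructor
  · rw [hr1] at hr
    lia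
  · rcases eq_or_eq_neg_of_sq_eq_sq r 1 (by rw [hr1, one_pow]) with rfl | rfl
    · left; ring
    · right; ring

/-- If `ζ ≠ 1` is a complex root of unity, a rational value of `ζ + ζ⁻¹ + 2` is an integer
less than `4`. -/
lemma exists_int_lt_four_of_add_inv_add_two_eq {ζ : ℂ} {n : ℕ} (hn : 0 < n) (hζ : ζ ^ n = 1)
    (hζ1 : ζ ≠ 1) {q : ℚ} (hq : ζ + ζ⁻¹ + 2 = q) : ∃ c : ℤ, (c : ℚ) = q ∧ c < 4 := by
  have hi : IsIntegral ℤ ζ := .of_pow hn (hζ ▸ isIntegral_one)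
  have hi' : IsIntegral ℤ ζ⁻¹ := .of_pow hn (by rw [inv_pow, hζ, inv_one]; exact isIntegral_one)
  have h2 : IsIntegral ℤ (2 : ℂ) := by exact_mod_cast isIntegral_algebraMap (R := ℤ) (x := 2)
  have hqi : IsIntegral ℤ (algebraMap ℚ ℂ q) := by
    rw [eq_ratCast, ← hq]
    exact (hi.add hi').add h2
  obtain ⟨c, hc⟩ := IsIntegrallyClosed.isIntegral_iff.mp
    ((isIntegral_algebraMap_iff (algebraMap ℚ ℂ).injective).mp hqi)
  rw [eq_intCast] at hc
  refine ⟨c, hc, ?_⟩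
  have hnorm : ‖ζ‖ = 1 := Complex.norm_eq_one_of_pow_eq_one hζ hn.ne'
  have hre : (c : ℝ) = 2 * ζ.re + 2 := by
    rw [← hc, Complex.inv_eq_conj hnorm, Complex.add_conj] at hq
    simpa using (congrArg Complex.re hq).symm
  have hsq : ζ.re * ζ.re + ζ.im * ζ.im = 1 := by
    rw [← Complex.normSq_apply, Complex.normSq_eq_norm_sq, hnorm, one_pow]
  have hlt : ζ.re < 1 := by
    refine lt_of_le_of_ne (hnorm ▸ Complex.re_le_norm ζ) fun h => hζ1 (Complex.ext h ?_)
    rw [h] at hsq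
    exact mul_self_eq_zero.mp (by linarith)
  have : (c : ℝ) < 4 := by linarith
  exact_mod_cast this

/-- Key arithmetic step: if `α β = p^(k-1)` with `k ≥ 2` even, `α + β` is a nonzero
integer, and `α/β` is a root of unity different from 1, then either `p = 2` and
`α + β = ±2^(k/2)`, or `p = 3` and `α + β = ±3^(k/2)`. -/
theorem stmt_10 (p : ℕ) (hp : p.Prime) (k : ℕ) (hk : 2 ≤ k) (hke : Even k)
    (α β : ℂ) (hprod : α * β = (p : ℂ) ^ (k - 1))
    (hint : ∃ m : ℤ, α + β = (m : ℂ)) (hne : α + β ≠ 0)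
    (hroot : ∃ n : ℕ, 0 < n ∧ (α / β) ^ n = 1) (hne1 : α / β ≠ 1) :
    (p = 2 ∧ (α + β = 2 ^ (k / 2) ∨ α + β = -(2 ^ (k / 2)))) ∨
    (p = 3 ∧ (α + β = 3 ^ (k / 2) ∨ α + β = -(3 ^ (k / 2)))) := by
  obtain ⟨m, hm⟩ := hint
  obtain ⟨n, hn, hζ⟩ := hroot
  obtain ⟨j, rfl⟩ : ∃ j, k = 2 * j + 2 := by
    obtain ⟨i, rfl⟩ := hke
    exact ⟨i - 1, by omega⟩
  rw [show 2 * j + 2 - 1 = 2 * j + 1 by omega] at hprod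
  rw [show (2 * j + 2) / 2 = j + 1 by omega]
  have hpj : (p : ℚ) ^ (2 * j + 1) ≠ 0 := pow_ne_zero _ (by exact_mod_cast hp.ne_zero)
  have hαβ : α * β ≠ 0 := by rw [hprod]; exact_mod_cast hpj
  have hα : α ≠ 0 := left_ne_zero_of_mul hαβ
  have hβ : β ≠ 0 := right_ne_zero_of_mul hαβ
  have hq : α / β + (α / β)⁻¹ + 2 = ((m ^ 2 / p ^ (2 * j + 1) : ℚ) : ℂ) := by
    push_cast
    rw [← hm, ← hprod]
    field_simp
    ring
  obtain ⟨c, hc, hc4⟩ := exists_int_lt_four_of_add_inv_add_two_eq hn hζ hne1 hq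
  have hmc : m ^ 2 = c * (p : ℤ) ^ (2 * j + 1) := by
    rw [eq_div_iff hpj] at hc
    exact_mod_cast hc.symm
  have hm0 : m ≠ 0 := by
    rintro rfl
    exact hne (by simpa using hm)
  have hc0 : 0 < c := by
    have hm2 : 0 < m ^ 2 := by positivity
    exact pos_of_mul_pos_left (hmc ▸ hm2) (by positivity)
  obtain ⟨hp23, hmp⟩ := eq_two_or_three_of_sq_eq_mul_prime_pow hp hc0 hc4 hmc
  have hsum : α + β = (p : ℂ) ^ (j + 1) ∨ α + β = -(p : ℂ) ^ (j + 1) := by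
    rw [hm]
    exact_mod_cast hmp
  rcases hp23 with rfl | rfl
  · exact .inl ⟨rfl, by exact_mod_cast hsum⟩
  · exact .inr ⟨rfl, by exact_mod_cast hsum⟩
end

section
/- Let F be a number field which is Galois over ℚ of odd degree, with ring of integers O_F, let L ⊆ ℂ be a subfield finite-dimensional over ℚ, let k₀ ≥ 1 be an integer and let 𝔠 be a nonzero ideal of O_F. Let C be a ℂ-valued function on the nonzero ideals of O_F taking all its values in L, and suppose: for every nonzero prime ideal 𝔭 not dividing 𝔠 there is a root of unity χ(𝔭) ∈ L such that C(𝔭^(m+2)) = C(𝔭)·C(𝔭^(m+1)) − χ(𝔭)·N(𝔭)^(2k₀−1)·C(𝔭^m) for all m ≥ 0 with C(𝔭^0) = 1, where N(𝔭) is the absolute norm; and for every prime ideal 𝔭 dividing 𝔠, C(𝔭^(m+1)) = C(𝔭)·C(𝔭^m) for all m ≥ 0 with C(𝔭^0) = 1. Then there exists an integer M ≥ 1 divisible by N(𝔠) such that for every rational prime p not dividing M and every nonzero prime ideal 𝔭 of O_F lying above p, either C(𝔭) = 0 or C(𝔭^r) ≠ 0 for all r ≥ 1. -/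
/-- An element whose square is a non-square scalar has trace zero. -/
theorem trace_eq_zero_of_sq_eq {K E : Type*} [Field K] [Field E] [Algebra K E]
    [FiniteDimensional K E] {r : K} (hr : ∀ t : K, t ^ 2 ≠ r) {z : E}
    (hz : z ^ 2 = algebraMap K E r) : Algebra.trace K E z = 0 := by
  have hmin : minpoly K z = Polynomial.X ^ 2 - Polynomial.C r := by
    refine (minpoly.eq_of_irreducible_of_monic
      (X_pow_sub_C_irreducible_of_prime Nat.prime_two hr) ?_
      (Polynomial.monic_X_pow_sub_C r two_ne_zero)).symm
    simp [hz]
  rw [trace_eq_finrank_mul_minpoly_nextCoeff, hmin,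
    Polynomial.nextCoeff_of_natDegree_pos (by simp)]
  simp

theorem Rat.sq_ne_mul_of_prime {p q : ℕ} (hp : p.Prime) (hq : q.Prime) (hpq : p ≠ q) (t : ℚ) :
    t ^ 2 ≠ p * q := by
  intro h
  have hsq : IsSquare ((p * q : ℕ) : ℚ) := ⟨t, by push_cast; rw [← h, sq]⟩
  obtain ⟨n, hn⟩ := Rat.isSquare_natCast_iff.1 hsq
  obtain ⟨m, rfl⟩ : p ∣ n := (or_self_iff.1 (hp.dvd_mul.1 ⟨q, hn.symm⟩))
  have hpos := hp.pos
  have hq' : q = p * (m * m) := Nat.eq_of_mul_eq_mul_left hpos (by rw [hn]; ring)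
  exact hpq ((Nat.prime_dvd_prime_iff_eq hp hq).1 ⟨_, hq'⟩)

/-- A nonzero element of a number field becomes a square after multiplication by only finitely
many rational primes. -/
theorem finite_setOf_prime_mul_isSquare {E : Type*} [Field E] [Algebra ℚ E]
    [FiniteDimensional ℚ E] {s : E} (hs : s ≠ 0) :
    {p : ℕ | p.Prime ∧ ∃ y : E, y ^ 2 = p * s}.Finite := by
  have : CharZero E := algebraRat.charZero E
  set T := {p : ℕ | p.Prime ∧ ∃ y : E, y ^ 2 = p * s}
  choose y hy using fun p : T => p.2.2
  let B : LinearMap.BilinForm ℚ E :=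
    (Algebra.traceForm ℚ E).compLeft (LinearMap.mulLeft ℚ s⁻¹)
  have hB (u v : E) : B u v = Algebra.trace ℚ E (s⁻¹ * u * v) := rfl
  have hli : LinearIndependent ℚ y := by
    refine LinearMap.BilinForm.linearIndependent_of_iIsOrtho (B := B) ?_ ?_
    · intro p q hpq
      refine trace_eq_zero_of_sq_eq
        (Rat.sq_ne_mul_of_prime p.2.1 q.2.1 (fun h => hpq (Subtype.ext h))) ?_
      change (s⁻¹ * y p * y q) ^ 2 = _
      rw [mul_pow, mul_pow, hy, hy]
      simp only [map_mul, map_natCast]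
      field_simp
    · intro p
      have h : s⁻¹ * y p * y p = algebraMap ℚ E (p : ℕ) := by
        rw [mul_assoc, ← sq, hy, map_natCast]
        field_simp
      rw [hB, h, Algebra.trace_algebraMap, smul_ne_zero_iff]
      exact ⟨Module.finrank_pos.ne', by exact_mod_cast p.2.1.ne_zero⟩
  have : Finite T := hli.finite
  exact T.toFinite

/-- If a second order linear recurrence with initial values `1, a` has a zero, then the ratio of
its characteristic roots is a root of unity. -/
theorem exists_rootOfUnity_of_recurrence_eq_zero_s19 {A : Type*} [Field A] [IsAlgClosed A]
    {u : ℕ → A} {a b : A} (hb : b ≠ 0) (h0 : u 0 = 1) (h1 : u 1 = a)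
    (hu : ∀ m, u (m + 2) = a * u (m + 1) - b * u m) {r : ℕ} (hr : u r = 0) :
    ∃ ζ : A, ζ ^ (r + 1) = 1 ∧ a ^ 2 / b = ζ + 2 + ζ⁻¹ := by
  obtain ⟨α, hα⟩ := IsAlgClosed.exists_root
    (Polynomial.X ^ 2 - Polynomial.C a * Polynomial.X + Polynomial.C b) (by
      have : (Polynomial.X ^ 2 - Polynomial.C a * Polynomial.X + Polynomial.C b).degree = 2 := by
        compute_degree!
      rw [this]; decide)
  obtain ⟨β, rfl⟩ : ∃ β, a = α + β := ⟨a - α, by ring⟩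
  obtain rfl : b = α * β := by
    simp [Polynomial.IsRoot.def] at hα
    linear_combination hα
  have hα0 : α ≠ 0 := left_ne_zero_of_mul hb
  have hβ0 : β ≠ 0 := right_ne_zero_of_mul hb
  have hclosed (m : ℕ) : (α - β) * u m = α ^ (m + 1) - β ^ (m + 1) := by
    induction m using Nat.twoStepInduction with
    | zero => simp [h0]
    | one => rw [h1]; ring
    | more m ih1 ih2 =>
      rw [hu]
      linear_combination (α + β) * ih2 - α * β * ih1
  refine ⟨α / β, ?_, ?_⟩
  · have := hclosed r
    rw [hr, mul_zero, eq_comm, sub_eq_zero] at this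
    rw [div_pow, this, div_self (pow_ne_zero _ hβ0)]
  · field_simp
    ring

theorem isIntegral_of_pow_eq_one {A : Type*} [CommRing A] {ζ : A} {n : ℕ} (hn : 0 < n)
    (h : ζ ^ n = 1) : IsIntegral ℤ ζ :=
  .of_pow hn (h ▸ isIntegral_one)

/-- If `u (m + 2) = a * u (m + 1) - χ * Q * u m` in a number field, with `χ` a root of unity, has a
zero, then `a ^ 2 / Q` is integral with all conjugates of absolute value at most `4`. -/
theorem isIntegral_and_norm_le_of_recurrence_eq_zero {E : Type*} [Field E] [NumberField E]
    {u : ℕ → E} {a χ : E} {Q : ℕ} (hQ : Q ≠ 0) {n : ℕ} (hn : 0 < n) (hχ : χ ^ n = 1)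
    (h0 : u 0 = 1) (h1 : u 1 = a)
    (hu : ∀ m, u (m + 2) = a * u (m + 1) - χ * Q * u m) {r : ℕ} (hr : u r = 0) :
    IsIntegral ℤ (a ^ 2 / Q) ∧ ∀ φ : E →+* ℂ, ‖φ (a ^ 2 / Q)‖ ≤ 4 := by
  have hQ' : (Q : ℂ) ≠ 0 := Nat.cast_ne_zero.2 hQ
  have key (φ : E →+* ℂ) : ∃ ζ : ℂ, ζ ^ (r + 1) = 1 ∧ φ (a ^ 2 / Q) = φ χ * (ζ + 2 + ζ⁻¹) := by
    have hφχ : φ χ ≠ 0 := (map_ne_zero φ).2 fun h => by simp [h, hn.ne'] at hχ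
    obtain ⟨ζ, hζ, h⟩ := exists_rootOfUnity_of_recurrence_eq_zero_s19 (u := fun m => φ (u m))
      (a := φ a) (b := φ χ * Q) (mul_ne_zero hφχ hQ') (by simp [h0]) (by simp [h1])
      (fun m => by simp [hu]) (r := r) (by simp [hr])
    refine ⟨ζ, hζ, ?_⟩
    rw [← h, map_div₀, map_pow, map_natCast]
    field_simp
  have hφn (φ : E →+* ℂ) : φ χ ^ n = 1 := by rw [← map_pow, hχ, map_one]
  refine ⟨?_, fun φ => ?_⟩
  · obtain ⟨φ⟩ : Nonempty (E →+* ℂ) := inferInstance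
    obtain ⟨ζ, hζ, h⟩ := key φ
    refine (isIntegral_algHom_iff φ.toIntAlgHom φ.injective).1 ?_
    change IsIntegral ℤ (φ (a ^ 2 / Q))
    rw [h]
    refine (isIntegral_of_pow_eq_one hn (hφn φ)).mul (((isIntegral_of_pow_eq_one r.succ_pos
      hζ).add ?_).add (isIntegral_of_pow_eq_one r.succ_pos (by rw [inv_pow, hζ, inv_one])))
    exact isIntegral_algebraMap (R := ℤ) (x := 2)
  · obtain ⟨ζ, hζ, h⟩ := key φ
    have hζ1 : ‖ζ‖ = 1 := Complex.norm_eq_one_of_pow_eq_one hζ r.succ_ne_zero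
    rw [h, norm_mul, Complex.norm_eq_one_of_pow_eq_one (hφn φ) hn.ne', one_mul]
    calc ‖ζ + 2 + ζ⁻¹‖ ≤ ‖ζ‖ + ‖(2 : ℂ)‖ + ‖ζ⁻¹‖ := norm_add₃_le
      _ = 4 := by rw [norm_inv, hζ1]; norm_num

/-- A prime ideal above `p` in a Galois number field of odd degree has norm an odd power of `p`. -/
theorem exists_odd_absNorm_eq_pow {F : Type*} [Field F] [NumberField F] [IsGalois ℚ F]
    (hodd : Odd (Module.finrank ℚ F)) {p : ℕ} (hp : p.Prime)
    (P : Ideal (NumberField.RingOfIntegers F)) [P.IsPrime]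
    (hpP : (p : NumberField.RingOfIntegers F) ∈ P) :
    ∃ f, Odd f ∧ Ideal.absNorm P = p ^ f := by
  have : Fact p.Prime := ⟨hp⟩
  have hpZ : (Ideal.span {(p : ℤ)}).IsMaximal := Int.ideal_span_isMaximal_of_prime p
  have : P.LiesOver (Ideal.span {(p : ℤ)}) := by
    refine ⟨hpZ.eq_of_le (Ideal.IsPrime.under ℤ P).ne_top ?_⟩
    rw [Ideal.span_singleton_le_iff_mem]
    simpa [Ideal.under] using hpP
  refine ⟨P.inertiaDeg ℤ, ?_, by simpa using (Ideal.natAbs_pow_inertiaDeg p P).symm⟩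
  refine hodd.of_dvd_nat ?_
  rw [← Ideal.inertiaDegIn_eq_inertiaDeg (Ideal.span {(p : ℤ)}) P Gal(F/ℚ),
    ← IsGaloisGroup.card_eq_finrank Gal(F/ℚ) ℚ F,
    ← Ideal.ncard_primesOver_mul_ramificationIdxIn_mul_inertiaDegIn (Ideal.span {(p : ℤ)})
      (NumberField.RingOfIntegers F) Gal(F/ℚ)]
  exact (dvd_mul_left _ _).mul_left _

/-- For odd `e`, the product of `x` with `a ^ 2 / x ^ e` is a square. -/
theorem exists_sq_eq_mul_div_odd_pow {E : Type*} [Field E] (a : E) {x : E} (hx : x ≠ 0) {e : ℕ}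
    (he : Odd e) : ∃ y : E, y ^ 2 = x * (a ^ 2 / x ^ e) := by
  obtain ⟨j, rfl⟩ := he
  refine ⟨a / x ^ j, ?_⟩
  field_simp
  ring

open NumberField in
/-- Coefficient-level non-vanishing result for primitive Hilbert modular forms over a
field `F` Galois over `ℚ` of odd degree: there is `M ≥ 1` with `N(𝔠) ∣ M` such that
for every rational prime `p ∤ M` and every nonzero prime ideal `𝔭` of `O_F` above `p`,
either `C 𝔭 = 0` or `C (𝔭^r) ≠ 0` for all `r ≥ 1`. -/
theorem stmt_19 (F : Type*) [Field F] [NumberField F] [IsGalois ℚ F]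
    (hodd : Odd (Module.finrank ℚ F))
    (L : IntermediateField ℚ ℂ) [FiniteDimensional ℚ L]
    (k₀ : ℕ) (hk₀ : 1 ≤ k₀)
    (𝔠 : Ideal (𝓞 F)) (h𝔠 : 𝔠 ≠ ⊥)
    (C : Ideal (𝓞 F) → ℂ)
    (hCL : ∀ I : Ideal (𝓞 F), I ≠ ⊥ → C I ∈ L)
    (hrec : ∀ 𝔭 : Ideal (𝓞 F), 𝔭.IsPrime → 𝔭 ≠ ⊥ → ¬ 𝔭 ∣ 𝔠 →
      ∃ χ : ℂ, χ ∈ L ∧ (∃ n : ℕ, 0 < n ∧ χ ^ n = 1) ∧ C (𝔭 ^ 0) = 1 ∧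
        ∀ m : ℕ, C (𝔭 ^ (m + 2)) =
          C 𝔭 * C (𝔭 ^ (m + 1)) - χ * (Ideal.absNorm 𝔭 : ℂ) ^ (2 * k₀ - 1) * C (𝔭 ^ m))
    (hdvd : ∀ 𝔭 : Ideal (𝓞 F), 𝔭.IsPrime → 𝔭 ≠ ⊥ → 𝔭 ∣ 𝔠 →
      C (𝔭 ^ 0) = 1 ∧ ∀ m : ℕ, C (𝔭 ^ (m + 1)) = C 𝔭 * C (𝔭 ^ m)) :
    ∃ M : ℕ, 1 ≤ M ∧ Ideal.absNorm 𝔠 ∣ M ∧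
      ∀ p : ℕ, p.Prime → ¬ p ∣ M →
        ∀ 𝔭 : Ideal (𝓞 F), 𝔭.IsPrime → 𝔭 ≠ ⊥ → (p : 𝓞 F) ∈ 𝔭 →
          C 𝔭 = 0 ∨ ∀ r : ℕ, 1 ≤ r → C (𝔭 ^ r) ≠ 0 := by
  have : NumberField L := { to_charZero := inferInstance, to_finiteDimensional := inferInstance }
  let S : Set L := {x | IsIntegral ℤ x ∧ ∀ φ : L →+* ℂ, ‖φ x‖ ≤ 4}
  have hS : S.Finite := Embeddings.finite_of_norm_le L ℂ 4
  let T : Set ℕ := ⋃ s ∈ S \ {0}, {p : ℕ | p.Prime ∧ ∃ y : L, y ^ 2 = p * s}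
  have hT : T.Finite := hS.sdiff.biUnion fun s hs => finite_setOf_prime_mul_isSquare hs.2
  have hTprime : ∀ p ∈ T, p.Prime := fun p hp => by
    simp only [T, Set.mem_iUnion] at hp
    obtain ⟨_, _, hp, _⟩ := hp
    exact hp
  refine ⟨Ideal.absNorm 𝔠 * ∏ p ∈ hT.toFinset, p, ?_, dvd_mul_right _ _, ?_⟩
  · refine Nat.one_le_iff_ne_zero.2 (mul_ne_zero (Ideal.absNorm_eq_zero_iff.not.2 h𝔠) ?_)
    exact Finset.prod_ne_zero_iff.2 fun p hp => (hTprime p (hT.mem_toFinset.1 hp)).ne_zero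
  intro p hp hpM 𝔭 h𝔭 h𝔭0 hp𝔭
  obtain ⟨f, hf, hN⟩ := exists_odd_absNorm_eq_pow hodd hp 𝔭 hp𝔭
  have h𝔭𝔠 : ¬ 𝔭 ∣ 𝔠 := fun h => hpM <| Dvd.dvd.mul_right
    (((dvd_pow_self p hf.pos.ne').trans hN.symm.dvd).trans (map_dvd Ideal.absNorm h)) _
  obtain ⟨χ, hχL, ⟨n, hn, hχ⟩, h0, hu⟩ := hrec 𝔭 h𝔭 h𝔭0 h𝔭𝔠
  by_contra! ⟨ha, r, -, hr⟩
  let u (m : ℕ) : L := ⟨C (𝔭 ^ m), hCL _ (pow_ne_zero m h𝔭0)⟩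
  have hQ : Ideal.absNorm 𝔭 ^ (2 * k₀ - 1) = p ^ (f * (2 * k₀ - 1)) := by rw [hN, pow_mul]
  have hpL : (p : L) ≠ 0 := Nat.cast_ne_zero.2 hp.ne_zero
  have hs := isIntegral_and_norm_le_of_recurrence_eq_zero (u := u) (a := u 1) (χ := ⟨χ, hχL⟩)
    (Q := p ^ (f * (2 * k₀ - 1))) (pow_ne_zero _ hp.ne_zero) hn (Subtype.ext hχ)
    (Subtype.ext h0) rfl (fun m => Subtype.ext (by simp [u, hu, ← hQ])) (Subtype.ext hr)
  have hu1 : u 1 ≠ 0 := fun h => ha (by simpa [u] using congrArg Subtype.val h)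
  have hpT : p ∈ T := by
    refine Set.mem_biUnion (x := u 1 ^ 2 / ((p ^ (f * (2 * k₀ - 1)) : ℕ) : L)) ⟨hs, ?_⟩ ⟨hp, ?_⟩
    · simp [hu1, hpL]
    · rw [Nat.cast_pow]
      exact exists_sq_eq_mul_div_odd_pow _ hpL (hf.mul ⟨k₀ - 1, by omega⟩)
  exact hpM (Dvd.dvd.mul_left (Finset.dvd_prod_of_mem _ (hT.mem_toFinset.2 hpT)) _)
end
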